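/- arXiv:1804.07673 — 6 statements merged into one kernel-verified Lean document; each statement's English description precedes it below -/
import Mathlib

section
/- Assume that every 3-uniform hypergraph on 8 vertices with b(8) = 48 edges not containing the Fano plane is isomorphic to B_8. Let n ≥ 9 be odd and let H be a 3-uniform hypergraph on n vertices with b(n) edges not containing the Fano plane. Suppose that whenever a 4-element set K of vertices induces a tetrahedron in H (all four 3-element subsets of K are edges), (i) the induced subhypergraph of H on V ∖ K is isomorphic to B_{n−4}, and (ii) every vertex v outside K lies in exactly 5 edges of H that contain v together with two vertices of K. Then H is isomorphic to B_n. -/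
/-- A `3`-uniform hypergraph (given by its edge set `E`) contains the Fano plane if
there are seven distinct vertices `v 0, …, v 6` such that the seven triples below
(the lines of the projective plane over `GF(2)`) are all edges. -/
def ContainsFano {α : Type*} [DecidableEq α] (E : Finset (Finset α)) : Prop :=
  ∃ v : Fin 7 → α, Function.Injective v ∧
    ({v 0, v 1, v 2} : Finset α) ∈ E ∧ ({v 2, v 3, v 4} : Finset α) ∈ E ∧
    ({v 0, v 4, v 5} : Finset α) ∈ E ∧ ({v 0, v 3, v 6} : Finset α) ∈ E ∧
    ({v 2, v 5, v 6} : Finset α) ∈ E ∧ ({v 1, v 4, v 6} : Finset α) ∈ E ∧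
    ({v 1, v 3, v 5} : Finset α) ∈ E

/-- `b n = C(n,3) − C(⌊n/2⌋,3) − C(⌈n/2⌉,3)`, the number of edges of the balanced,
complete, bipartite `3`-uniform hypergraph on `n` vertices. -/
def b (n : ℕ) : ℕ := n.choose 3 - (n / 2).choose 3 - ((n + 1) / 2).choose 3

theorem aux_choose3 (a : ℕ) : 6 * (a + 2).choose 3 = (a + 2) * (a + 1) * a := by
  have h1 := Nat.choose_succ_right_eq (a + 2) 2
  have h2 := Nat.choose_succ_right_eq (a + 2) 1
  simp at h1 h2
  nlinarith

theorem aux_tetra_exists (n : ℕ) (hn : 9 ≤ n) (hodd : Odd n) (E : Finset (Finset (Fin n)))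
    (h3 : ∀ e ∈ E, e.card = 3) (hcard : E.card = b n) :
    ∃ K : Finset (Fin n), K.card = 4 ∧ (∀ e ⊆ K, e.card = 3 → e ∈ E) := by
  classical
  by_contra hcon
  push Not at hcon
  have key := Finset.card_mul_le_card_mul (s := Finset.powersetCard 4 (Finset.univ : Finset (Fin n)))
    (t := Finset.powersetCard 3 (Finset.univ : Finset (Fin n)) \ E)
    (fun K e => e ⊆ K) (m := 1) (n := n - 3)
    (by
      intro K hK
      obtain ⟨e, he, he3, heE⟩ := hcon K (Finset.mem_powersetCard.1 hK).2
      apply Finset.card_pos.2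
      refine ⟨e, ?_⟩
      simp [Finset.mem_bipartiteAbove, he, he3, heE])
    (by
      intro e he
      have he3 : e.card = 3 := by
        simp at he; exact he.1
      have hsub : Finset.bipartiteBelow (fun (K e : Finset (Fin n)) => e ⊆ K)
          (Finset.powersetCard 4 (Finset.univ : Finset (Fin n))) e ⊆
          (Finset.univ \ e).image (fun v => insert v e) := by
        intro K hK
        simp only [Finset.mem_bipartiteBelow, Finset.mem_powersetCard] at hK
        obtain ⟨⟨_, hK4⟩, heK⟩ := hK
        have hd : (K \ e).card = 1 := by
          rw [Finset.card_sdiff_of_subset heK]; omega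
        obtain ⟨v, hv⟩ := Finset.card_eq_one.1 hd
        simp only [Finset.mem_image]
        have hvm : v ∈ K \ e := by rw [hv]; simp
        refine ⟨v, by simp at hvm ⊢; exact hvm.2, ?_⟩
        rw [← Finset.sdiff_union_of_subset heK, hv]
        rfl
      refine (Finset.card_le_card hsub).trans (Finset.card_image_le.trans ?_)
      rw [Finset.card_sdiff_of_subset (Finset.subset_univ _)]
      simp [he3])
  have hEs : E ⊆ Finset.powersetCard 3 (Finset.univ : Finset (Fin n)) := by
    intro e he
    simp [h3 e he]
  rw [Finset.card_sdiff_of_subset hEs] at key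
  simp only [Finset.card_powersetCard, Finset.card_univ, Fintype.card_fin, mul_one, hcard] at key
  have h4 := Nat.choose_succ_right_eq n 3
  have hm : n.choose 3 - b n ≤ (n / 2).choose 3 + ((n + 1) / 2).choose 3 := by
    unfold b; omega
  have hpos : 0 < n - 3 := by omega
  have hle : n.choose 3 ≤ 4 * ((n / 2).choose 3 + ((n + 1) / 2).choose 3) := by
    have : n.choose 3 * (n - 3) ≤ (4 * ((n / 2).choose 3 + ((n + 1) / 2).choose 3)) * (n - 3) := by
      nlinarith [Nat.mul_le_mul_right (n - 3) hm]
    exact Nat.le_of_mul_le_mul_right this hpos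
  obtain ⟨k, rfl⟩ := hodd
  obtain ⟨j, rfl⟩ : ∃ j, k = j + 2 := ⟨k - 2, by omega⟩
  have e1 : (2 * (j + 2) + 1) / 2 = j + 2 := by omega
  have e2 : (2 * (j + 2) + 1 + 1) / 2 = (j + 1) + 2 := by omega
  have e3 : 2 * (j + 2) + 1 = (2 * j + 3) + 2 := by omega
  rw [e1, e2, e3] at hle
  have a1 := aux_choose3 j
  have a2 := aux_choose3 (j + 1)
  have a3 := aux_choose3 (2 * j + 3)
  nlinarith

theorem aux_count {n : ℕ} (E : Finset (Finset (Fin n))) (h3 : ∀ e ∈ E, e.card = 3)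
    (K L : Finset (Fin n)) (hKL : Disjoint K L) (hK : K.card = 4) (hL : L.card = 4)
    (hKt : ∀ e ⊆ K, e.card = 3 → e ∈ E)
    (h5 : ∀ v : Fin n, v ∉ K → (E.filter (fun e => v ∈ e ∧ (e ∩ K).card = 2)).card = 5) :
    ((E.filter (fun e => e ⊆ K ∪ L)).filter (fun e => (e ∩ K).card = 3)).card = 4 ∧
    ((E.filter (fun e => e ⊆ K ∪ L)).filter (fun e => (e ∩ K).card = 2)).card = 20 := by
  classical
  constructor
  · have : (E.filter (fun e => e ⊆ K ∪ L)).filter (fun e => (e ∩ K).card = 3)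
        = Finset.powersetCard 3 K := by
      ext e
      simp only [Finset.mem_filter, Finset.mem_powersetCard]
      constructor
      · rintro ⟨⟨he, hs⟩, hc⟩
        have : e ∩ K = e := Finset.eq_of_subset_of_card_le Finset.inter_subset_left
          (by rw [hc, h3 e he])
        exact ⟨Finset.inter_eq_left.1 this, h3 e he⟩
      · rintro ⟨hs, hc⟩
        refine ⟨⟨hKt e hs hc, hs.trans Finset.subset_union_left⟩, ?_⟩
        rw [Finset.inter_eq_left.2 hs, hc]
    rw [this, Finset.card_powersetCard, hK]
    rfl
  · have hone : ∀ e ∈ E, (e ∩ K).card = 2 → (e \ K).card = 1 := by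
      intro e he hc
      have := Finset.card_sdiff_add_card_inter e K
      have := h3 e he
      omega
    have : (E.filter (fun e => e ⊆ K ∪ L)).filter (fun e => (e ∩ K).card = 2)
        = L.biUnion (fun v => E.filter (fun e => v ∈ e ∧ (e ∩ K).card = 2)) := by
      ext e
      simp only [Finset.mem_filter, Finset.mem_biUnion]
      constructor
      · rintro ⟨⟨he, hs⟩, hc⟩
        obtain ⟨v, hv⟩ := Finset.card_eq_one.1 (hone e he hc)
        have hvm : v ∈ e \ K := by rw [hv]; simp
        rw [Finset.mem_sdiff] at hvm
        refine ⟨v, ?_, he, hvm.1, hc⟩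
        have := hs hvm.1
        rw [Finset.mem_union] at this
        tauto
      · rintro ⟨v, hvL, he, hve, hc⟩
        refine ⟨⟨he, ?_⟩, hc⟩
        obtain ⟨w, hw⟩ := Finset.card_eq_one.1 (hone e he hc)
        have hvK : v ∉ K := fun h => Finset.disjoint_left.1 hKL h hvL
        have hvw : v = w := by
          have : v ∈ e \ K := Finset.mem_sdiff.2 ⟨hve, hvK⟩
          rw [hw] at this
          simpa using this
        intro u hu
        by_cases huK : u ∈ K
        · simp [huK]
        · have : u ∈ e \ K := Finset.mem_sdiff.2 ⟨hu, huK⟩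
          rw [hw] at this
          have : u = w := by simpa using this
          rw [this, ← hvw]
          simp [hvL]
    rw [this, Finset.card_biUnion]
    · rw [Finset.sum_congr rfl (fun v hv => h5 v (fun h => Finset.disjoint_left.1 hKL h hv))]
      simp [hL]
    · intro v hv w hw hvw
      change Disjoint _ _
      rw [Finset.disjoint_left]
      intro e he he'
      simp only [Finset.mem_filter] at he he'
      obtain ⟨u, hu⟩ := Finset.card_eq_one.1 (hone e he.1 he.2.2)
      have h1 : v ∈ e \ K := Finset.mem_sdiff.2
        ⟨he.2.1, fun h => Finset.disjoint_left.1 hKL h hv⟩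
      have h2 : w ∈ e \ K := Finset.mem_sdiff.2
        ⟨he'.2.1, fun h => Finset.disjoint_left.1 hKL h hw⟩
      rw [hu] at h1 h2
      simp at h1 h2
      exact hvw (h1.trans h2.symm)

theorem aux_count48 {n : ℕ} (E : Finset (Finset (Fin n))) (h3 : ∀ e ∈ E, e.card = 3)
    (K L : Finset (Fin n)) (hKL : Disjoint K L) (hK : K.card = 4) (hL : L.card = 4)
    (hKt : ∀ e ⊆ K, e.card = 3 → e ∈ E) (hLt : ∀ e ⊆ L, e.card = 3 → e ∈ E)
    (h5 : ∀ v : Fin n, v ∉ K → (E.filter (fun e => v ∈ e ∧ (e ∩ K).card = 2)).card = 5)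
    (h5' : ∀ v : Fin n, v ∉ L → (E.filter (fun e => v ∈ e ∧ (e ∩ L).card = 2)).card = 5) :
    (E.filter (fun e => e ⊆ K ∪ L)).card = 48 := by
  classical
  obtain ⟨a3, a2⟩ := aux_count E h3 K L hKL hK hL hKt h5
  obtain ⟨b3, b2⟩ := aux_count E h3 L K hKL.symm hL hK hLt h5'
  rw [Finset.union_comm L K] at b3 b2
  have hsum : ∀ e ∈ E.filter (fun e => e ⊆ K ∪ L), (e ∩ K).card + (e ∩ L).card = 3 := by
    intro e he
    simp only [Finset.mem_filter] at he
    rw [← Finset.card_union_of_disjoint, ← Finset.inter_union_distrib_left,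
      Finset.inter_eq_left.2 he.2, h3 e he.1]
    exact hKL.mono Finset.inter_subset_right Finset.inter_subset_right
  have c0 : (E.filter (fun e => e ⊆ K ∪ L)).filter (fun e => (e ∩ L).card = 3)
      = (E.filter (fun e => e ⊆ K ∪ L)).filter (fun e => (e ∩ K).card = 0) := by
    apply Finset.filter_congr
    intro e he
    have := hsum e he
    omega
  have c1 : (E.filter (fun e => e ⊆ K ∪ L)).filter (fun e => (e ∩ L).card = 2)
      = (E.filter (fun e => e ⊆ K ∪ L)).filter (fun e => (e ∩ K).card = 1) := by
    apply Finset.filter_congr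
    intro e he
    have := hsum e he
    omega
  rw [c0] at b3
  rw [c1] at b2
  rw [Finset.card_eq_sum_card_fiberwise (f := fun e => (e ∩ K).card) (t := Finset.range 4)]
  · simp only [Finset.sum_range_succ, Finset.sum_range_zero]
    omega
  · intro e he
    have := hsum e he
    simp
    omega

theorem aux_transfer (h8 : ∀ E : Finset (Finset (Fin 8)),
      (∀ e ∈ E, e.card = 3) → E.card = b 8 → ¬ ContainsFano E →
      ∃ X Y : Finset (Fin 8), Disjoint X Y ∧ X ∪ Y = Finset.univ ∧
        ((X.card : ℤ) - (Y.card : ℤ)).natAbs ≤ 1 ∧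
        ∀ e : Finset (Fin 8), e.card = 3 →
          (e ∈ E ↔ (e ∩ X).Nonempty ∧ (e ∩ Y).Nonempty))
    {n : ℕ} (E : Finset (Finset (Fin n))) (h3 : ∀ e ∈ E, e.card = 3) (hF : ¬ ContainsFano E)
    (S : Finset (Fin n)) (hS : S.card = 8) (h48 : (E.filter (fun e => e ⊆ S)).card = 48) :
    ∃ A B : Finset (Fin n), Disjoint A B ∧ A ∪ B = S ∧ A.card = 4 ∧ B.card = 4 ∧
      ∀ e : Finset (Fin n), e.card = 3 → e ⊆ S →
        (e ∈ E ↔ (e ∩ A).Nonempty ∧ (e ∩ B).Nonempty) := by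
  classical
  let f : Fin 8 ↪ Fin n := (S.orderEmbOfFin hS).toEmbedding
  have hf : Finset.univ.map f = S := by
    ext x
    have := Finset.range_orderEmbOfFin S hS
    have h2 : x ∈ Set.range (S.orderEmbOfFin hS) ↔ x ∈ (S : Set (Fin n)) := by rw [this]
    simpa [f] using h2
  have hpre : ∀ e ⊆ S, ∃ e' : Finset (Fin 8), e'.map f = e := by
    intro e he
    rw [← hf] at he
    obtain ⟨u, _, hu⟩ := Finset.subset_map_iff.1 he
    exact ⟨u, hu.symm⟩
  let E' : Finset (Finset (Fin 8)) := Finset.univ.filter (fun s => s.map f ∈ E)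
  have hE' : ∀ s, s ∈ E' ↔ s.map f ∈ E := by intro s; simp [E']
  have hc : E'.card = b 8 := by
    have : E.filter (fun e => e ⊆ S) = E'.map (Finset.mapEmbedding f).toEmbedding := by
      ext e
      simp only [Finset.mem_filter, Finset.mem_map]
      constructor
      · rintro ⟨he, hs⟩
        obtain ⟨e', rfl⟩ := hpre e hs
        exact ⟨e', (hE' _).2 he, rfl⟩
      · rintro ⟨e', he', rfl⟩
        refine ⟨(hE' _).1 he', ?_⟩
        change e'.map f ⊆ S
        rw [← hf]
        exact Finset.map_subset_map.2 (Finset.subset_univ _)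
    rw [this, Finset.card_map] at h48
    rw [h48]
    decide
  have hF' : ¬ ContainsFano E' := by
    rintro ⟨v, hv, h⟩
    apply hF
    refine ⟨fun i => f (v i), fun i j hij => hv (f.injective hij), ?_⟩
    simp only [hE', Finset.map_insert, Finset.map_singleton] at h
    exact h
  obtain ⟨X, Y, hd, hu, hb, hiff⟩ := h8 E' (by
    intro e he
    rw [← Finset.card_map f]
    exact h3 _ ((hE' e).1 he)) hc hF'
  have hXY : X.card + Y.card = 8 := by
    rw [← Finset.card_union_of_disjoint hd, hu]; simp
  refine ⟨X.map f, Y.map f, (Finset.disjoint_map f).2 hd, ?_, ?_, ?_, ?_⟩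
  · rw [← Finset.map_union, hu, hf]
  · rw [Finset.card_map]; omega
  · rw [Finset.card_map]; omega
  · intro e he hs
    obtain ⟨e', rfl⟩ := hpre e hs
    rw [← Finset.map_inter, ← Finset.map_inter, Finset.map_nonempty, Finset.map_nonempty,
      ← hE', hiff e' (by simpa using he)]

theorem aux_22 {n : ℕ} (E : Finset (Finset (Fin n))) (K A B S : Finset (Fin n))
    (hAB : Disjoint A B) (hK : K.card = 4) (hKS : K ⊆ S)
    (hKt : ∀ e ⊆ K, e.card = 3 → e ∈ E) (hS : A ∪ B = S)
    (h : ∀ e : Finset (Fin n), e.card = 3 → e ⊆ S →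
        (e ∈ E ↔ (e ∩ A).Nonempty ∧ (e ∩ B).Nonempty)) :
    (K ∩ A).card = 2 ∧ (K ∩ B).card = 2 := by
  classical
  have hsum : (K ∩ A).card + (K ∩ B).card = 4 := by
    rw [← Finset.card_union_of_disjoint, ← Finset.inter_union_distrib_left, hS,
      Finset.inter_eq_left.2 hKS, hK]
    exact hAB.mono Finset.inter_subset_right Finset.inter_subset_right
  have hA : (K ∩ A).card ≤ 2 := by
    by_contra hcon
    obtain ⟨e, he, hc⟩ := Finset.exists_subset_card_eq (show 3 ≤ (K ∩ A).card by omega)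
    have heK := he.trans Finset.inter_subset_left
    obtain ⟨_, x, hx⟩ := (h e hc (heK.trans hKS)).1 (hKt e heK hc)
    rw [Finset.mem_inter] at hx
    exact Finset.disjoint_left.1 hAB (Finset.inter_subset_right (he hx.1)) hx.2
  have hB : (K ∩ B).card ≤ 2 := by
    by_contra hcon
    obtain ⟨e, he, hc⟩ := Finset.exists_subset_card_eq (show 3 ≤ (K ∩ B).card by omega)
    have heK := he.trans Finset.inter_subset_left
    obtain ⟨⟨x, hx⟩, _⟩ := (h e hc (heK.trans hKS)).1 (hKt e heK hc)
    rw [Finset.mem_inter] at hx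
    exact Finset.disjoint_left.1 hAB hx.2 (Finset.inter_subset_right (he hx.1))
  omega

/-- missing pairs -/
def auxM {n : ℕ} (E : Finset (Finset (Fin n))) (K : Finset (Fin n)) (v : Fin n) :
    Finset (Finset (Fin n)) :=
  (Finset.powersetCard 2 K).filter (fun P => insert v P ∉ E)

theorem aux_M {n : ℕ} (E : Finset (Finset (Fin n))) (K A B S : Finset (Fin n))
    (hAB : Disjoint A B) (hKS : K ⊆ S) (hS : A ∪ B = S)
    (h : ∀ e : Finset (Fin n), e.card = 3 → e ⊆ S →
        (e ∈ E ↔ (e ∩ A).Nonempty ∧ (e ∩ B).Nonempty))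
    (hA : (K ∩ A).card = 2) (v : Fin n) (hvA : v ∈ A) (hvK : v ∉ K) :
    auxM E K v = {K ∩ A} := by
  classical
  ext P
  simp only [auxM, Finset.mem_filter, Finset.mem_powersetCard, Finset.mem_singleton]
  have hvS : v ∈ S := by rw [← hS]; simp [hvA]
  have hP : ∀ P ⊆ K, P.card = 2 → (insert v P ∉ E ↔ P ⊆ A) := by
    intro P hPK hP2
    have hvP : v ∉ P := fun h => hvK (hPK h)
    rw [h (insert v P) (by rw [Finset.card_insert_of_notMem hvP, hP2])
      (Finset.insert_subset hvS (hPK.trans hKS))]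
    have h1 : (insert v P ∩ A).Nonempty := ⟨v, by simp [hvA]⟩
    constructor
    · intro hn x hx
      by_contra hxA
      apply hn
      refine ⟨h1, x, ?_⟩
      have := hKS (hPK hx)
      rw [← hS, Finset.mem_union] at this
      simp [hx]
      tauto
    · rintro hPA ⟨_, x, hx⟩
      simp only [Finset.mem_inter, Finset.mem_insert] at hx
      obtain ⟨rfl | hx1, hx2⟩ := hx
      · exact Finset.disjoint_left.1 hAB hvA hx2
      · exact Finset.disjoint_left.1 hAB (hPA hx1) hx2
  constructor
  · rintro ⟨⟨hPK, hP2⟩, hn⟩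
    have := (hP P hPK hP2).1 hn
    exact Finset.eq_of_subset_of_card_le (Finset.subset_inter hPK this) (by omega)
  · rintro rfl
    exact ⟨⟨Finset.inter_subset_left, hA⟩,
      (hP _ Finset.inter_subset_left hA).2 Finset.inter_subset_right⟩

theorem aux_four {α : Type*} [DecidableEq α] (x1 x2 y1 y2 : α) (hx : x1 ≠ x2) (hy : y1 ≠ y2)
    (h1 : x1 ≠ y1) (h2 : x1 ≠ y2) (h3 : x2 ≠ y1) (h4 : x2 ≠ y2) (A : Finset α)
    (hc : (({x1, x2, y1, y2} : Finset α) ∩ A).card = 2) :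
    (x1 ∈ A ∧ x2 ∈ A ∧ y1 ∉ A ∧ y2 ∉ A) ∨ (x1 ∉ A ∧ x2 ∉ A ∧ y1 ∈ A ∧ y2 ∈ A) ∨
    (x1 ∈ A ∧ x2 ∉ A ∧ y1 ∈ A ∧ y2 ∉ A) ∨ (x1 ∈ A ∧ x2 ∉ A ∧ y1 ∉ A ∧ y2 ∈ A) ∨
    (x1 ∉ A ∧ x2 ∈ A ∧ y1 ∈ A ∧ y2 ∉ A) ∨ (x1 ∉ A ∧ x2 ∈ A ∧ y1 ∉ A ∧ y2 ∈ A) := by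
  by_cases a1 : x1 ∈ A <;> by_cases a2 : x2 ∈ A <;> by_cases a3 : y1 ∈ A <;>
    by_cases a4 : y2 ∈ A <;>
    simp [a1, a2, a3, a4, Finset.insert_inter_of_mem, Finset.insert_inter_of_notMem, hx, hy, h1,
      h2, h3, h4, Finset.card_insert_of_notMem] at hc ⊢

set_option maxHeartbeats 1600000 in
theorem B_n_of_tetrahedra (h8 : ∀ E : Finset (Finset (Fin 8)),
      (∀ e ∈ E, e.card = 3) → E.card = b 8 → ¬ ContainsFano E →
      ∃ X Y : Finset (Fin 8), Disjoint X Y ∧ X ∪ Y = Finset.univ ∧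
        ((X.card : ℤ) - (Y.card : ℤ)).natAbs ≤ 1 ∧
        ∀ e : Finset (Fin 8), e.card = 3 →
          (e ∈ E ↔ (e ∩ X).Nonempty ∧ (e ∩ Y).Nonempty))
    (n : ℕ) (hn : 9 ≤ n) (hodd : Odd n) (E : Finset (Finset (Fin n)))
    (h3 : ∀ e ∈ E, e.card = 3) (hcard : E.card = b n) (hF : ¬ ContainsFano E)
    (htetra : ∀ K : Finset (Fin n), K.card = 4 → (∀ e ⊆ K, e.card = 3 → e ∈ E) →
      (∃ X Y : Finset (Fin n), Disjoint X Y ∧ X ∪ Y = Finset.univ \ K ∧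
        ((X.card : ℤ) - (Y.card : ℤ)).natAbs ≤ 1 ∧
        ∀ e : Finset (Fin n), e.card = 3 → e ⊆ Finset.univ \ K →
          (e ∈ E ↔ (e ∩ X).Nonempty ∧ (e ∩ Y).Nonempty)) ∧
      (∀ v : Fin n, v ∉ K →
        (E.filter (fun e => v ∈ e ∧ (e ∩ K).card = 2)).card = 5)) :
    ∃ X Y : Finset (Fin n), Disjoint X Y ∧ X ∪ Y = Finset.univ ∧
      ((X.card : ℤ) - (Y.card : ℤ)).natAbs ≤ 1 ∧
      ∀ e : Finset (Fin n), e.card = 3 →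
        (e ∈ E ↔ (e ∩ X).Nonempty ∧ (e ∩ Y).Nonempty) := by
  classical
  obtain ⟨K, hK, hKt⟩ := aux_tetra_exists n hn hodd E h3 hcard
  obtain ⟨⟨X, Y, hXY, hU, hbal, hout⟩, h5⟩ := htetra K hK hKt
  have hXK : ∀ x ∈ X, x ∉ K := by
    intro x hx
    have : x ∈ X ∪ Y := Finset.mem_union_left _ hx
    rw [hU] at this
    exact (Finset.mem_sdiff.1 this).2
  have hYK : ∀ x ∈ Y, x ∉ K := by
    intro x hx
    have : x ∈ X ∪ Y := Finset.mem_union_right _ hx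
    rw [hU] at this
    exact (Finset.mem_sdiff.1 this).2
  have hne : ∀ x ∈ X, ∀ y ∈ Y, x ≠ y := by
    rintro x hx y hy rfl
    exact Finset.disjoint_left.1 hXY hx hy
  have hcs : X.card + Y.card = n - 4 := by
    rw [← Finset.card_union_of_disjoint hXY, hU, Finset.card_sdiff_of_subset (Finset.subset_univ _)]
    simp [hK]
  -- local structure
  have hloc : ∀ x1 ∈ X, ∀ x2 ∈ X, ∀ y1 ∈ Y, ∀ y2 ∈ Y, x1 ≠ x2 → y1 ≠ y2 →
      ∃ A B : Finset (Fin n), Disjoint A B ∧ A ∪ B = K ∪ {x1, x2, y1, y2} ∧ x1 ∈ A ∧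
        (K ∩ A).card = 2 ∧ (K ∩ B).card = 2 ∧
        (({x1, x2, y1, y2} : Finset (Fin n)) ∩ A).card = 2 ∧
        (∀ v ∈ A, v ∉ K → auxM E K v = {K ∩ A}) ∧ (∀ v ∈ B, v ∉ K → auxM E K v = {K ∩ B}) ∧
        ∀ e : Finset (Fin n), e.card = 3 → e ⊆ K ∪ {x1, x2, y1, y2} →
          (e ∈ E ↔ (e ∩ A).Nonempty ∧ (e ∩ B).Nonempty) := by
    intro x1 hx1 x2 hx2 y1 hy1 y2 hy2 hx hy
    have q1 := hne x1 hx1 y1 hy1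
    have q2 := hne x1 hx1 y2 hy2
    have q3 := hne x2 hx2 y1 hy1
    have q4 := hne x2 hx2 y2 hy2
    obtain ⟨L, hLdef⟩ : ∃ L : Finset (Fin n), L = {x1, x2, y1, y2} := ⟨_, rfl⟩
    rw [← hLdef]
    have hL : L.card = 4 := by
      rw [hLdef]; simp [Finset.card_insert_of_notMem, *]
    have hKL : Disjoint K L := by
      rw [Finset.disjoint_right]
      intro v hv
      rw [hLdef] at hv
      simp only [Finset.mem_insert, Finset.mem_singleton] at hv
      rcases hv with rfl | rfl | rfl | rfl
      · exact hXK _ hx1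
      · exact hXK _ hx2
      · exact hYK _ hy1
      · exact hYK _ hy2
    have hLX : (L ∩ X).card ≤ 2 := by
      have : L ∩ X ⊆ {x1, x2} := by
        intro v hv
        rw [hLdef] at hv
        simp only [Finset.mem_inter, Finset.mem_insert, Finset.mem_singleton] at hv ⊢
        rcases hv with ⟨h | h | h | h, hvX⟩
        · exact Or.inl h
        · exact Or.inr h
        · exact absurd h (hne v hvX y1 hy1)
        · exact absurd h (hne v hvX y2 hy2)
      exact (Finset.card_le_card this).trans Finset.card_le_two
    have hLY : (L ∩ Y).card ≤ 2 := by
      have : L ∩ Y ⊆ {y1, y2} := by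
        intro v hv
        rw [hLdef] at hv
        simp only [Finset.mem_inter, Finset.mem_insert, Finset.mem_singleton] at hv ⊢
        rcases hv with ⟨h | h | h | h, hvY⟩
        · exact absurd h.symm (hne x1 hx1 v hvY)
        · exact absurd h.symm (hne x2 hx2 v hvY)
        · exact Or.inl h
        · exact Or.inr h
      exact (Finset.card_le_card this).trans Finset.card_le_two
    have hLXY : L ⊆ X ∪ Y := by
      rw [hU]
      intro v hv
      simp [Finset.disjoint_right.1 hKL hv]
    have hLt : ∀ e ⊆ L, e.card = 3 → e ∈ E := by
      intro e he hc
      have hcov : e ⊆ X ∪ Y := he.trans hLXY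
      rw [hout e hc (by rw [← hU]; exact hcov)]
      have hs : (e ∩ X).card + (e ∩ Y).card = 3 := by
        rw [← Finset.card_union_of_disjoint, ← Finset.inter_union_distrib_left,
          Finset.inter_eq_left.2 hcov, hc]
        exact hXY.mono Finset.inter_subset_right Finset.inter_subset_right
      have hX2 := Finset.card_le_card (Finset.inter_subset_inter_right (u := X) he)
      have hY2 := Finset.card_le_card (Finset.inter_subset_inter_right (u := Y) he)
      constructor
      · apply Finset.card_pos.1; omega
      · apply Finset.card_pos.1; omega
    have h5' := (htetra L hL hLt).2
    have h48 := aux_count48 E h3 K L hKL hK hL hKt hLt h5 h5'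
    obtain ⟨A, B, hAB, hABu, hA4, hB4, hiff⟩ := aux_transfer h8 E h3 hF (K ∪ L)
      (by rw [Finset.card_union_of_disjoint hKL]; omega) h48
    have k2 := aux_22 E K A B _ hAB hK Finset.subset_union_left hKt hABu hiff
    have l2 := aux_22 E L A B _ hAB hL Finset.subset_union_right hLt hABu hiff
    have hiff' : ∀ e : Finset (Fin n), e.card = 3 → e ⊆ K ∪ L →
        (e ∈ E ↔ (e ∩ B).Nonempty ∧ (e ∩ A).Nonempty) := by
      intro e he hs
      rw [hiff e he hs, and_comm]
    have hABu' : B ∪ A = K ∪ L := by rw [Finset.union_comm, hABu]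
    have mA := aux_M E K A B _ hAB Finset.subset_union_left hABu hiff k2.1
    have mB := aux_M E K B A _ hAB.symm Finset.subset_union_left hABu' hiff' k2.2
    have hx1m : x1 ∈ A ∪ B := by rw [hABu, hLdef]; simp
    rcases Finset.mem_union.1 hx1m with h | h
    · exact ⟨A, B, hAB, hABu, h, k2.1, k2.2, l2.1, mA, mB, hiff⟩
    · exact ⟨B, A, hAB.symm, hABu', h, k2.2, k2.1, l2.2, mB, mA, hiff'⟩
  have hC : ∀ x1 ∈ X, ∀ x2 ∈ X, ∀ y1 ∈ Y, ∀ y2 ∈ Y, x1 ≠ x2 → y1 ≠ y2 →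
      (auxM E K x1 = auxM E K x2 ∧ auxM E K y1 = auxM E K y2 ∧ auxM E K x1 ≠ auxM E K y1) ∨
      (auxM E K x1 ≠ auxM E K x2 ∧ auxM E K y1 ≠ auxM E K y2 ∧
        (auxM E K x1 = auxM E K y1 ∨ auxM E K x1 = auxM E K y2) ∧
        (auxM E K x2 = auxM E K y1 ∨ auxM E K x2 = auxM E K y2)) := by
    intro x1 hx1 x2 hx2 y1 hy1 y2 hy2 hx hy
    obtain ⟨A, B, hAB, hu, hx1A, hkA, hkB, hLA, mA, mB, -⟩ :=
      hloc x1 hx1 x2 hx2 y1 hy1 y2 hy2 hx hy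
    have hPQ : ({K ∩ A} : Finset (Finset (Fin n))) ≠ {K ∩ B} := by
      intro h
      rw [Finset.singleton_inj] at h
      obtain ⟨z, hz⟩ := Finset.card_pos.1 (show 0 < (K ∩ A).card by omega)
      have hz' := hz
      rw [h] at hz'
      rw [Finset.mem_inter] at hz hz'
      exact Finset.disjoint_left.1 hAB hz.2 hz'.2
    have hm : ∀ v ∈ ({x1, x2, y1, y2} : Finset (Fin n)), v ∉ A → v ∈ B := by
      intro v hv hvA
      have : v ∈ A ∪ B := by rw [hu]; exact Finset.mem_union_right _ hv
      exact (Finset.mem_union.1 this).resolve_left hvA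
    have a2 := mA x2
    have a3 := mA y1
    have a4 := mA y2
    have b2 := mB x2
    have b3 := mB y1
    have b4 := mB y2
    have a1 := mA x1 hx1A (hXK _ hx1)
    have m2 := hm x2 (by simp)
    have m3 := hm y1 (by simp)
    have m4 := hm y2 (by simp)
    have k2 := hXK _ hx2
    have k3 := hYK _ hy1
    have k4 := hYK _ hy2
    rcases aux_four x1 x2 y1 y2 hx hy (hne x1 hx1 y1 hy1) (hne x1 hx1 y2 hy2)
      (hne x2 hx2 y1 hy1) (hne x2 hx2 y2 hy2) A hLA with h | h | h | h | h | h <;> grind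
  have hD : ∀ x1 ∈ X, ∀ x2 ∈ X, ∀ y1 ∈ Y, ∀ y2 ∈ Y, x1 ≠ x2 → y1 ≠ y2 →
      (auxM E K x1 = auxM E K x2 ∧ auxM E K y1 = auxM E K y2 ∧
        auxM E K x1 ≠ auxM E K y1) := by
    intro x1 hx1 x2 hx2 y1 hy1 y2 hy2 hx hy
    have c0 := hC x1 hx1 x2 hx2 y1 hy1 y2 hy2 hx hy
    by_cases hX3 : 3 ≤ X.card
    · obtain ⟨x3, hx3⟩ := Finset.card_pos.1 (show 0 < (X \ {x1, x2}).card by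
        have := Finset.le_card_sdiff {x1, x2} X
        have := Finset.card_le_two (a := x1) (b := x2)
        omega)
      simp only [Finset.mem_sdiff, Finset.mem_insert, Finset.mem_singleton, not_or] at hx3
      have c1 := hC x1 hx1 x3 hx3.1 y1 hy1 y2 hy2 (Ne.symm hx3.2.1) hy
      have c2 := hC x2 hx2 x3 hx3.1 y1 hy1 y2 hy2 (Ne.symm hx3.2.2) hy
      clear hloc hC h8 htetra
      grind
    · obtain ⟨y3, hy3⟩ := Finset.card_pos.1 (show 0 < (Y \ {y1, y2}).card by
        have := Finset.le_card_sdiff {y1, y2} Y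
        have := Finset.card_le_two (a := y1) (b := y2)
        omega)
      simp only [Finset.mem_sdiff, Finset.mem_insert, Finset.mem_singleton, not_or] at hy3
      have c1 := hC x1 hx1 x2 hx2 y1 hy1 y3 hy3.1 hx (Ne.symm hy3.2.1)
      have c2 := hC x1 hx1 x2 hx2 y2 hy2 y3 hy3.1 hx (Ne.symm hy3.2.2)
      clear hloc hC h8 htetra
      grind
  obtain ⟨x1, hx1, x2, hx2, hx⟩ := Finset.one_lt_card.1 (show 1 < X.card by omega)
  obtain ⟨y1, hy1, y2, hy2, hy⟩ := Finset.one_lt_card.1 (show 1 < Y.card by omega)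
  -- structure for all four-sets, with fixed P, Q
  obtain ⟨P, Q, hPQd, hPQ, hP2, hQ2, hfin⟩ : ∃ P Q : Finset (Fin n), Disjoint P Q ∧ P ∪ Q = K ∧
      P.card = 2 ∧ Q.card = 2 ∧ ∀ x1 ∈ X, ∀ x2 ∈ X, ∀ y1 ∈ Y, ∀ y2 ∈ Y, x1 ≠ x2 → y1 ≠ y2 →
        ∀ e : Finset (Fin n), e.card = 3 → e ⊆ K ∪ {x1, x2, y1, y2} →
          (e ∈ E ↔ (e ∩ (X ∪ P)).Nonempty ∧ (e ∩ (Y ∪ Q)).Nonempty) := by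
    obtain ⟨A, B, hAB, hu, hx1A, hkA, hkB, hLA, mA, mB, -⟩ :=
      hloc x1 hx1 x2 hx2 y1 hy1 y2 hy2 hx hy
    have hKAB : ∀ A' B' : Finset (Fin n), ∀ L, A' ∪ B' = K ∪ L → (K ∩ A') ∪ (K ∩ B') = K := by
      intro A' B' L h
      rw [← Finset.inter_union_distrib_left, h]
      exact Finset.inter_eq_left.2 Finset.subset_union_left
    refine ⟨K ∩ A, K ∩ B, hAB.mono Finset.inter_subset_right Finset.inter_subset_right,
      hKAB A B _ hu, hkA, hkB, ?_⟩
    intro z1 hz1 z2 hz2 w1 hw1 w2 hw2 hz hw e he hes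
    obtain ⟨A', B', hAB', hu', hz1A, hkA', hkB', hLA', mA', mB', hiff⟩ :=
      hloc z1 hz1 z2 hz2 w1 hw1 w2 hw2 hz hw
    have hmx : auxM E K z1 = auxM E K x1 := by
      by_cases h : z1 = x1
      · rw [h]
      · exact (hD z1 hz1 x1 hx1 y1 hy1 y2 hy2 h hy).1
    rw [mA' z1 hz1A (hXK _ hz1), mA x1 hx1A (hXK _ hx1), Finset.singleton_inj] at hmx
    have hd := hD z1 hz1 z2 hz2 w1 hw1 w2 hw2 hz hw
    have hm : ∀ v ∈ ({z1, z2, w1, w2} : Finset (Fin n)), v ∉ A' → v ∈ B' := by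
      intro v hv hvA
      have : v ∈ A' ∪ B' := by rw [hu']; exact Finset.mem_union_right _ hv
      exact (Finset.mem_union.1 this).resolve_left hvA
    have hw1A : w1 ∉ A' := by
      intro h
      apply hd.2.2
      rw [mA' z1 hz1A (hXK _ hz1), mA' w1 h (hYK _ hw1)]
    have hw2A : w2 ∉ A' := by
      intro h
      apply hd.2.2
      rw [hd.2.1, mA' z1 hz1A (hXK _ hz1), mA' w2 h (hYK _ hw2)]
    have hz2A : z2 ∈ A' := by
      rcases aux_four z1 z2 w1 w2 hz hw (hne z1 hz1 w1 hw1) (hne z1 hz1 w2 hw2)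
        (hne z2 hz2 w1 hw1) (hne z2 hz2 w2 hw2) A' hLA' with h | h | h | h | h | h <;> (clear h8 htetra hloc; clear hC; clear hD; clear hout h5 hcard hF h3 hKt; tauto)
    have hw1B := hm w1 (by simp) hw1A
    have hw2B := hm w2 (by simp) hw2A
    rw [hiff e he hes]
    have memA : ∀ v ∈ K, (v ∈ A' ↔ v ∈ A) := by
      intro v hv
      have : v ∈ K ∩ A' ↔ v ∈ K ∩ A := by rw [hmx]
      simpa [hv] using this
    have memAB : ∀ v ∈ K, (v ∈ B ↔ v ∉ A) := by
      intro v hv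
      have : v ∈ A ∪ B := by rw [hu]; simp [hv]
      rw [Finset.mem_union] at this
      have : v ∈ A → v ∉ B := fun h => Finset.disjoint_left.1 hAB h
      (clear h8 htetra hloc; clear hC; clear hD; clear hout h5 hcard hF h3 hKt; tauto)
    have memAB' : ∀ v ∈ K, (v ∈ B' ↔ v ∉ A') := by
      intro v hv
      have : v ∈ A' ∪ B' := by rw [hu']; simp [hv]
      rw [Finset.mem_union] at this
      have : v ∈ A' → v ∉ B' := fun h => Finset.disjoint_left.1 hAB' h
      (clear h8 htetra hloc; clear hC; clear hD; clear hout h5 hcard hF h3 hKt; tauto)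
    have nB := Finset.disjoint_left.1 hAB'
    have nY := Finset.disjoint_left.1 hXY
    have tA : e ∩ A' = e ∩ (X ∪ (K ∩ A)) := by
      ext v
      simp only [Finset.mem_inter, Finset.mem_union, and_congr_right_iff]
      intro hv
      have := hes hv
      simp only [Finset.mem_union, Finset.mem_insert, Finset.mem_singleton] at this
      rcases this with h | rfl | rfl | rfl | rfl
      · have := memA v h
        have := hXK v
        (clear h8 htetra hloc; clear hC; clear hD; clear hout h5 hcard hF h3 hKt; tauto)
      · (clear h8 htetra hloc; clear hC; clear hD; clear hout h5 hcard hF h3 hKt; tauto)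
      · (clear h8 htetra hloc; clear hC; clear hD; clear hout h5 hcard hF h3 hKt; tauto)
      · have := @nY v
        have := hYK _ hw1
        (clear h8 htetra hloc; clear hC; clear hD; clear hout h5 hcard hF h3 hKt; tauto)
      · have := @nY v
        have := hYK _ hw2
        (clear h8 htetra hloc; clear hC; clear hD; clear hout h5 hcard hF h3 hKt; tauto)
    have tB : e ∩ B' = e ∩ (Y ∪ (K ∩ B)) := by
      ext v
      simp only [Finset.mem_inter, Finset.mem_union, and_congr_right_iff]
      intro hv
      have := hes hv
      simp only [Finset.mem_union, Finset.mem_insert, Finset.mem_singleton] at this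
      rcases this with h | rfl | rfl | rfl | rfl
      · have := memA v h
        have := memAB v h
        have := memAB' v h
        have := hYK v
        (clear h8 htetra hloc; clear hC; clear hD; clear hout h5 hcard hF h3 hKt; tauto)
      · have := nY hz1
        have := nB hz1A
        have := hXK _ hz1
        (clear h8 htetra hloc; clear hC; clear hD; clear hout h5 hcard hF h3 hKt; tauto)
      · have := nY hz2
        have := nB hz2A
        have := hXK _ hz2
        (clear h8 htetra hloc; clear hC; clear hD; clear hout h5 hcard hF h3 hKt; tauto)
      · (clear h8 htetra hloc; clear hC; clear hD; clear hout h5 hcard hF h3 hKt; tauto)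
      · (clear h8 htetra hloc; clear hC; clear hD; clear hout h5 hcard hF h3 hKt; tauto)
    rw [tA, tB]
  have hPK : P ⊆ K := by rw [← hPQ]; exact Finset.subset_union_left
  have hQK : Q ⊆ K := by rw [← hPQ]; exact Finset.subset_union_right
  have hXP : Disjoint X P := Finset.disjoint_left.2 (fun v hv hp => hXK v hv (hPK hp))
  have hYQ : Disjoint Y Q := Finset.disjoint_left.2 (fun v hv hp => hYK v hv (hQK hp))
  have hXQ : Disjoint X Q := Finset.disjoint_left.2 (fun v hv hp => hXK v hv (hQK hp))
  have hYP : Disjoint Y P := Finset.disjoint_left.2 (fun v hv hp => hYK v hv (hPK hp))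
  refine ⟨X ∪ P, Y ∪ Q, ?_, ?_, ?_, ?_⟩
  · rw [Finset.disjoint_union_left, Finset.disjoint_union_right, Finset.disjoint_union_right]
    exact ⟨⟨hXY, hXQ⟩, hYP.symm, hPQd⟩
  · rw [Finset.union_union_union_comm, hU, hPQ]
    exact Finset.sdiff_union_of_subset (Finset.subset_univ _)
  · rw [Finset.card_union_of_disjoint hXP, Finset.card_union_of_disjoint hYQ, hP2, hQ2]
    push_cast
    simpa using hbal
  · intro e he
    by_cases hKe : Disjoint e K
    · have hs : e ⊆ Finset.univ \ K := by
        intro v hv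
        simp [Finset.disjoint_left.1 hKe hv]
      rw [hout e he hs]
      have i1 : e ∩ P = ∅ := Finset.disjoint_iff_inter_eq_empty.1 (hKe.mono_right hPK)
      have i2 : e ∩ Q = ∅ := Finset.disjoint_iff_inter_eq_empty.1 (hKe.mono_right hQK)
      rw [Finset.inter_union_distrib_left, Finset.inter_union_distrib_left, i1, i2]
      simp
    · -- extend e \ K to a four-set
      have hek : 0 < (e ∩ K).card := by
        apply Finset.card_pos.2
        exact Finset.not_disjoint_iff_nonempty_inter.1 hKe
      have hsd := Finset.card_sdiff_add_card_inter e K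
      have hex : (e ∩ X).card ≤ 2 := by
        have : e ∩ X ⊆ e \ K := by
          intro v hv
          rw [Finset.mem_inter] at hv
          exact Finset.mem_sdiff.2 ⟨hv.1, hXK v hv.2⟩
        have := Finset.card_le_card this
        omega
      have hey : (e ∩ Y).card ≤ 2 := by
        have : e ∩ Y ⊆ e \ K := by
          intro v hv
          rw [Finset.mem_inter] at hv
          exact Finset.mem_sdiff.2 ⟨hv.1, hYK v hv.2⟩
        have := Finset.card_le_card this
        omega
      obtain ⟨X2, hX2a, hX2b, hX2c⟩ := Finset.exists_subsuperset_card_eq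
        (Finset.inter_subset_right (s₁ := e) (s₂ := X)) hex (by omega)
      obtain ⟨Y2, hY2a, hY2b, hY2c⟩ := Finset.exists_subsuperset_card_eq
        (Finset.inter_subset_right (s₁ := e) (s₂ := Y)) hey (by omega)
      obtain ⟨z1, z2, hz, rfl⟩ := Finset.card_eq_two.1 hX2c
      obtain ⟨w1, w2, hw, rfl⟩ := Finset.card_eq_two.1 hY2c
      refine hfin z1 (hX2b (by simp)) z2 (hX2b (by simp)) w1 (hY2b (by simp)) w2
        (hY2b (by simp)) hz hw e he ?_
      intro v hv
      by_cases hvK : v ∈ K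
      · exact Finset.mem_union_left _ hvK
      · apply Finset.mem_union_right
        have : v ∈ X ∪ Y := by rw [hU]; simp [hvK]
        rcases Finset.mem_union.1 this with h | h
        · have := hX2a (Finset.mem_inter.2 ⟨hv, h⟩)
          simp only [Finset.mem_insert, Finset.mem_singleton] at this ⊢
          grind only
        · have := hY2a (Finset.mem_inter.2 ⟨hv, h⟩)
          simp only [Finset.mem_insert, Finset.mem_singleton] at this ⊢
          grind only
end

section
/- For every n ≥ 4, the maximum total number of edges of a 4-multigraph on n vertices that does not contain three crossing pairs is exactly 2·C(n,2) + 2·⌊n²/4⌋; that is, every 4-tuple (G_1, G_2, G_3, G_4) of simple graphs on a common n-element vertex set without three crossing pairs satisfies e(G_1)+e(G_2)+e(G_3)+e(G_4) ≤ 2·C(n,2) + 2·⌊n²/4⌋, and this bound is attained. -/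
/-- A `p`-multigraph `G` (a `p`-tuple of simple graphs on a common vertex set) contains
three crossing pairs if there are three distinct indices `i, j, k` and four distinct
vertices `w, x, y, z` with `wx, yz ∈ G i`, `wy, xz ∈ G j`, and `wz, xy ∈ G k`. -/
def HasThreeCrossingPairs {p : ℕ} {V : Type*} (G : Fin p → SimpleGraph V) : Prop :=
  ∃ i j k : Fin p, i ≠ j ∧ i ≠ k ∧ j ≠ k ∧
    ∃ w x y z : V, w ≠ x ∧ w ≠ y ∧ w ≠ z ∧ x ≠ y ∧ x ≠ z ∧ y ≠ z ∧
      (G i).Adj w x ∧ (G i).Adj y z ∧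
      (G j).Adj w y ∧ (G j).Adj x z ∧
      (G k).Adj w z ∧ (G k).Adj x y

theorem sdr_aux (P Q R : Finset (Fin 4)) (hP : 1 ≤ P.card) (hQ : 2 ≤ Q.card) (hR : 3 ≤ R.card) :
    ∃ p ∈ P, ∃ q ∈ Q, ∃ r ∈ R, p ≠ q ∧ p ≠ r ∧ q ≠ r := by
  obtain ⟨p, hp⟩ := Finset.card_pos.1 hP
  obtain ⟨q, hq, hqp⟩ := Finset.exists_mem_notMem_of_card_lt_card
    (s := {p}) (t := Q) (by rw [Finset.card_singleton]; omega)
  obtain ⟨r, hr, hrp⟩ := Finset.exists_mem_notMem_of_card_lt_card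
    (s := {p, q}) (t := R) (lt_of_le_of_lt Finset.card_le_two (by omega))
  simp only [Finset.mem_singleton, Finset.mem_insert, not_or] at hqp hrp
  exact ⟨p, hp, q, hq, r, hr, Ne.symm hqp, Ne.symm hrp.1, Ne.symm hrp.2⟩

theorem sdr_num (P Q R : Finset (Fin 4))
    (h : ¬ ∃ p ∈ P, ∃ q ∈ Q, ∃ r ∈ R, p ≠ q ∧ p ≠ r ∧ q ≠ r) :
    P.card + Q.card + R.card ≤ 8 ∧
    (P.card + Q.card + R.card = 8 → P.card = 0 ∨ Q.card = 0 ∨ R.card = 0) := by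
  have h1 : ¬ (1 ≤ P.card ∧ 2 ≤ Q.card ∧ 3 ≤ R.card) := fun ⟨a, b, c⟩ => by
    obtain ⟨p, hp, q, hq, r, hr, x, y, z⟩ := sdr_aux P Q R a b c
    exact h ⟨p, hp, q, hq, r, hr, x, y, z⟩
  have h2 : ¬ (1 ≤ P.card ∧ 2 ≤ R.card ∧ 3 ≤ Q.card) := fun ⟨a, b, c⟩ => by
    obtain ⟨p, hp, r, hr, q, hq, x, y, z⟩ := sdr_aux P R Q a b c
    exact h ⟨p, hp, q, hq, r, hr, y, x, z.symm⟩
  have h3 : ¬ (1 ≤ Q.card ∧ 2 ≤ P.card ∧ 3 ≤ R.card) := fun ⟨a, b, c⟩ => by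
    obtain ⟨q, hq, p, hp, r, hr, x, y, z⟩ := sdr_aux Q P R a b c
    exact h ⟨p, hp, q, hq, r, hr, x.symm, z, y⟩
  have h4 : ¬ (1 ≤ Q.card ∧ 2 ≤ R.card ∧ 3 ≤ P.card) := fun ⟨a, b, c⟩ => by
    obtain ⟨q, hq, r, hr, p, hp, x, y, z⟩ := sdr_aux Q R P a b c
    exact h ⟨p, hp, q, hq, r, hr, y.symm, z.symm, x⟩
  have h5 : ¬ (1 ≤ R.card ∧ 2 ≤ P.card ∧ 3 ≤ Q.card) := fun ⟨a, b, c⟩ => by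
    obtain ⟨r, hr, p, hp, q, hq, x, y, z⟩ := sdr_aux R P Q a b c
    exact h ⟨p, hp, q, hq, r, hr, z, x.symm, y.symm⟩
  have h6 : ¬ (1 ≤ R.card ∧ 2 ≤ Q.card ∧ 3 ≤ P.card) := fun ⟨a, b, c⟩ => by
    obtain ⟨r, hr, q, hq, p, hp, x, y, z⟩ := sdr_aux R Q P a b c
    exact h ⟨p, hp, q, hq, r, hr, z.symm, y.symm, x.symm⟩
  have a := Finset.card_le_univ P
  have b := Finset.card_le_univ Q
  have c := Finset.card_le_univ R
  simp only [Fintype.card_fin] at a b c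
  omega

/-- numeric hypotheses on the multiplicities -/
structure WGood {V : Type*} (w : V → V → ℕ) : Prop where
  symm : ∀ u v, w u v = w v u
  self : ∀ u, w u u = 0
  le4 : ∀ u v, w u v ≤ 4
  four : ∀ a b c d, a ≠ b → a ≠ c → a ≠ d → b ≠ c → b ≠ d → c ≠ d →
    ∃ i j k, w a b + w c d ≤ 4 + i ∧ w a c + w b d ≤ 4 + j ∧ w a d + w b c ≤ 4 + k ∧
      i + j + k ≤ 8 ∧ (i + j + k = 8 → i = 0 ∨ j = 0 ∨ k = 0)

section
variable {V : Type*} [DecidableEq V]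

def DD (w : V → V → ℕ) (S : Finset V) : ℕ := ∑ u ∈ S, ∑ v ∈ S, w u v

theorem DD_le (w : V → V → ℕ) (h : WGood w) (m : ℕ) (S : Finset V)
    (hm : ∀ u ∈ S, ∀ v ∈ S, u ≠ v → w u v ≤ m) : DD w S ≤ S.card * ((S.card - 1) * m) := by
  unfold DD
  refine (Finset.sum_le_card_nsmul S _ ((S.card - 1) * m) ?_).trans (by simp)
  intro u hu
  rw [← Finset.add_sum_erase S _ hu, h.self, zero_add, ← Finset.card_erase_of_mem hu]
  refine (Finset.sum_le_card_nsmul _ _ m ?_).trans (by simp)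
  intro v hv
  rw [Finset.mem_erase] at hv
  exact hm u hu v hv.2 hv.1.symm

theorem DD_split (w : V → V → ℕ) (h : WGood w) (S T : Finset V) (hT : T ⊆ S) :
    DD w S = DD w T + DD w (S \ T) + 2 * ∑ r ∈ S \ T, ∑ t ∈ T, w r t := by
  unfold DD
  have e : ∀ u, ∑ v ∈ S, w u v = ∑ v ∈ S \ T, w u v + ∑ v ∈ T, w u v := fun u =>
    (Finset.sum_sdiff hT).symm
  rw [← Finset.sum_sdiff hT]
  simp only [e, Finset.sum_add_distrib]
  have : ∑ x ∈ T, ∑ v ∈ S \ T, w x v = ∑ r ∈ S \ T, ∑ t ∈ T, w r t := by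
    rw [Finset.sum_comm]
    exact Finset.sum_congr rfl fun _ _ => Finset.sum_congr rfl fun _ _ => h.symm _ _
  rw [this]; ring

theorem DD_two (w : V → V → ℕ) (h : WGood w) {a b : V} (hab : a ≠ b) :
    DD w {a, b} = 2 * w a b := by
  simp [DD, Finset.sum_pair hab, h.self, h.symm b a]; ring

theorem sum_three (f : V → ℕ) {a b c : V} (hab : a ≠ b) (hac : a ≠ c) (hbc : b ≠ c) :
    ∑ t ∈ ({a, b, c} : Finset V), f t = f a + f b + f c := by
  rw [Finset.sum_insert (by simp [hab, hac]), Finset.sum_pair hbc]; ring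

theorem DD_three (w : V → V → ℕ) (h : WGood w) {a b c : V}
    (hab : a ≠ b) (hac : a ≠ c) (hbc : b ≠ c) :
    DD w {a, b, c} = 2 * (w a b + w a c + w b c) := by
  simp [DD, sum_three _ hab hac hbc, h.self, h.symm b a, h.symm c a, h.symm c b]; ring

theorem fl_step2 (k : ℕ) : (k + 2) ^ 2 / 4 = k ^ 2 / 4 + k + 1 := by
  have : (k + 2) ^ 2 = k ^ 2 + 4 * (k + 1) := by ring
  omega

theorem fl_step3 (k : ℕ) : 2 * (k ^ 2 / 4) + 3 * k + 4 ≤ 2 * ((k + 3) ^ 2 / 4) := by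
  have h : (k + 3) ^ 2 = k ^ 2 + 6 * k + 9 := by ring
  rcases Nat.even_or_odd' k with ⟨m, rfl | rfl⟩
  · have : (2 * m) ^ 2 = 4 * m ^ 2 := by ring
    omega
  · have : (2 * m + 1) ^ 2 = 4 * (m ^ 2 + m) + 1 := by ring
    omega

theorem lemA (w : V → V → ℕ) (h : WGood w) : ∀ (n : ℕ) (S : Finset V), S.card = n →
    (∀ a ∈ S, ∀ b ∈ S, ∀ c ∈ S, a ≠ b → a ≠ c → b ≠ c → w a b + w a c + w b c ≤ 10) →
    DD w S + 2 * n ≤ 2 * n ^ 2 + 4 * (n ^ 2 / 4) := by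
  intro n
  induction n using Nat.strong_induction_on with
  | _ n ih =>
  intro S hS ht
  by_cases hx : ∃ a ∈ S, ∃ b ∈ S, a ≠ b ∧ w a b = 4
  · obtain ⟨a, ha, b, hb, hab, h4⟩ := hx
    have hsub : ({a, b} : Finset V) ⊆ S := by
      intro x; simp only [Finset.mem_insert, Finset.mem_singleton]; rintro (rfl | rfl) <;> assumption
    have hc : (S \ {a, b}).card = n - 2 := by
      rw [Finset.card_sdiff_of_subset hsub, Finset.card_pair hab, hS]
    have hn2 : 2 ≤ n := by
      rw [← hS, ← Finset.card_pair hab]; exact Finset.card_le_card hsub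
    obtain ⟨k, rfl⟩ := Nat.exists_eq_add_of_le' hn2
    simp only [Nat.add_sub_cancel] at hc
    have h1 := ih k (by omega) _ hc (fun a ha b hb c hc => ht a (Finset.sdiff_subset ha) b
      (Finset.sdiff_subset hb) c (Finset.sdiff_subset hc))
    have h2 := DD_split w h S _ hsub
    have h3 : ∑ r ∈ S \ {a, b}, ∑ t ∈ ({a, b} : Finset V), w r t ≤ k * 6 := by
      rw [← hc]
      refine (Finset.sum_le_card_nsmul _ _ 6 ?_).trans (by simp)
      intro r hr
      simp only [Finset.mem_sdiff, Finset.mem_insert, Finset.mem_singleton, not_or] at hr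
      rw [Finset.sum_pair hab]
      have := ht r hr.1 a ha b hb hr.2.1 hr.2.2 hab
      omega
    rw [DD_two w h hab] at h2
    have := fl_step2 k
    have e : (k + 2) ^ 2 = k ^ 2 + 4 * k + 4 := by ring
    rw [this, e]
    omega
  · push Not at hx
    have h1 := DD_le w h 3 S (fun u hu v hv huv => by
      have := h.le4 u v
      have := hx u hu v hv huv
      omega)
    rw [hS] at h1
    rcases Nat.even_or_odd' n with ⟨m, rfl | rfl⟩
    · rcases m with _ | m
      · simpa using h1
      · have e1 : (2 * (m + 1)) ^ 2 = 4 * (m + 1) ^ 2 := by ring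
        have e2 : 2 * (m + 1) - 1 = 2 * m + 1 := by omega
        rw [e2] at h1
        rw [e1, Nat.mul_div_cancel_left _ (by norm_num)]
        nlinarith
    · have e1 : (2 * m + 1) ^ 2 = 4 * (m ^ 2 + m) + 1 := by ring
      have e2 : (4 * (m ^ 2 + m) + 1) / 4 = m ^ 2 + m := by omega
      rw [e1, e2]
      simp only [Nat.add_sub_cancel] at h1
      nlinarith

theorem four_le (w : V → V → ℕ) (h : WGood w) {a b c d : V} (hab : a ≠ b) (hac : a ≠ c)
    (had : a ≠ d) (hbc : b ≠ c) (hbd : b ≠ d) (hcd : c ≠ d) :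
    w a b + w a c + w b c + (w d a + w d b + w d c) ≤ 20 := by
  obtain ⟨i, j, k, h1, h2, h3, h4, -⟩ := h.four a b c d hab hac had hbc hbd hcd
  rw [h.symm d a, h.symm d b, h.symm d c]
  omega

theorem tight (w : V → V → ℕ) (h : WGood w) {a b c d : V} (hab : a ≠ b) (hac : a ≠ c)
    (had : a ≠ d) (hbc : b ≠ c) (hbd : b ≠ d) (hcd : c ≠ d)
    (h1 : w a b = 4) (h2 : w a c = 4) (h3 : w b c = 3) (h9 : 9 ≤ w d a + w d b + w d c) :
    w d b = 4 ∧ w d c = 4 := by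
  obtain ⟨i, j, k, h1, h2, h3, h4, h5⟩ := h.four a b c d hab hac had hbc hbd hcd
  have := h.le4 d a
  have := h.le4 d b
  have := h.le4 d c
  rw [h.symm d a, h.symm d b, h.symm d c] at *
  omega

theorem mainW (w : V → V → ℕ) (h : WGood w) : ∀ (n : ℕ) (S : Finset V), S.card = n → 4 ≤ n →
    DD w S + 2 * n ≤ 2 * n ^ 2 + 4 * (n ^ 2 / 4) := by
  intro n
  induction n using Nat.strong_induction_on with
  | _ n ih =>
  intro S hS hn
  by_cases ht : ∀ a ∈ S, ∀ b ∈ S, ∀ c ∈ S, a ≠ b → a ≠ c → b ≠ c → w a b + w a c + w b c ≤ 10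
  · exact lemA w h n S hS ht
  -- a general reduction
  have key : ∀ a ∈ S, ∀ b ∈ S, ∀ c ∈ S, a ≠ b → a ≠ c → b ≠ c → ∃ k R, n = k + 3 ∧
      R ⊆ S ∧ R.card = k ∧ (∀ r ∈ R, r ∈ S ∧ a ≠ r ∧ b ≠ r ∧ c ≠ r) ∧
      DD w S = 2 * (w a b + w a c + w b c) + DD w R +
        2 * ∑ r ∈ R, (w r a + w r b + w r c) := by
    intro a ha b hb c hc hab hac hbc
    have hsub : ({a, b, c} : Finset V) ⊆ S := by
      intro x; simp only [Finset.mem_insert, Finset.mem_singleton]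
      rintro (rfl | rfl | rfl) <;> assumption
    have h3 : ({a, b, c} : Finset V).card = 3 := Finset.card_eq_three.2 ⟨a, b, c, hab, hac, hbc, rfl⟩
    refine ⟨n - 3, S \ {a, b, c}, by omega, Finset.sdiff_subset, ?_, ?_, ?_⟩
    · rw [Finset.card_sdiff_of_subset hsub, h3, hS]
    · intro r hr
      simp only [Finset.mem_sdiff, Finset.mem_insert, Finset.mem_singleton, not_or] at hr
      exact ⟨hr.1, Ne.symm hr.2.1, Ne.symm hr.2.2.1, Ne.symm hr.2.2.2⟩
    · rw [DD_split w h S _ hsub, DD_three w h hab hac hbc]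
      simp only [sum_three _ hab hac hbc]
  -- bound on the rest
  have rest : ∀ k R, n = k + 3 → R.card = k → 2 ≤ k →
      DD w R + 2 * k ≤ 2 * k ^ 2 + 4 * (k ^ 2 / 4) + (if k = 3 then 4 else 0) := by
    intro k R hk hR h2
    have := DD_le w h 4 R (fun u _ v _ _ => h.le4 u v)
    rw [hR] at this
    by_cases h4 : 4 ≤ k
    · have := ih k (by omega) R hR h4
      omega
    · interval_cases k <;> simp_all
  by_cases h12 : ∃ a ∈ S, ∃ b ∈ S, ∃ c ∈ S, a ≠ b ∧ a ≠ c ∧ b ≠ c ∧ 12 ≤ w a b + w a c + w b c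
  · obtain ⟨a, ha, b, hb, c, hc, hab, hac, hbc, h12⟩ := h12
    obtain ⟨k, R, rfl, hRS, hR, hmem, hD⟩ := key a ha b hb c hc hab hac hbc
    have hs : ∑ r ∈ R, (w r a + w r b + w r c) ≤ k * 8 := by
      rw [← hR]
      refine (Finset.sum_le_card_nsmul _ _ 8 ?_).trans (by simp)
      intro r hr
      obtain ⟨_, x, y, z⟩ := hmem r hr
      have := four_le w h hab hac x hbc y z
      omega
    have u1 := h.le4 a b
    have u2 := h.le4 a c
    have u3 := h.le4 b c
    by_cases hk : 2 ≤ k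
    · have h1 := rest k R rfl hR hk
      have h2 := fl_step3 k
      have e : (k + 3) ^ 2 = k ^ 2 + 6 * k + 9 := by ring
      rw [e] at h2 ⊢
      split_ifs at h1 <;> omega
    · obtain rfl : k = 1 := by omega
      have := DD_le w h 4 R (fun u _ v _ _ => h.le4 u v)
      rw [hR] at this
      omega
  · push Not at ht h12
    have : ∃ a ∈ S, ∃ b ∈ S, ∃ c ∈ S, a ≠ b ∧ a ≠ c ∧ b ≠ c ∧ w a b = 4 ∧ w a c = 4 ∧ w b c = 3 := by
      obtain ⟨a, ha, b, hb, c, hc, hab, hac, hbc, h11⟩ := ht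
      have := h12 a ha b hb c hc hab hac hbc
      have u1 := h.le4 a b
      have u2 := h.le4 a c
      have u3 := h.le4 b c
      have : (w a b = 4 ∧ w a c = 4 ∧ w b c = 3) ∨ (w a b = 4 ∧ w a c = 3 ∧ w b c = 4) ∨
        (w a b = 3 ∧ w a c = 4 ∧ w b c = 4) := by omega
      rcases this with ⟨x, y, z⟩ | ⟨x, y, z⟩ | ⟨x, y, z⟩
      · exact ⟨a, ha, b, hb, c, hc, hab, hac, hbc, x, y, z⟩
      · exact ⟨b, hb, a, ha, c, hc, hab.symm, hbc, hac, by rw [h.symm]; exact x, z, y⟩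
      · exact ⟨c, hc, a, ha, b, hb, hac.symm, hbc.symm, hab, by rw [h.symm]; exact y,
          by rw [h.symm]; exact z, x⟩
    obtain ⟨a, ha, b, hb, c, hc, hab, hac, hbc, x1, x2, x3⟩ := this
    obtain ⟨k, R, rfl, hRS, hR, hmem, hD⟩ := key a ha b hb c hc hab hac hbc
    have hle : ∀ r ∈ R, w r a + w r b + w r c ≤ 9 := by
      intro r hr
      obtain ⟨_, x, y, z⟩ := hmem r hr
      have := four_le w h hab hac x hbc y z
      omega
    have hs : ∑ r ∈ R, (w r a + w r b + w r c) ≤ k * 9 := by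
      rw [← hR]
      exact (Finset.sum_le_card_nsmul _ _ 9 hle).trans (by simp)
    rw [x1, x2, x3] at hD
    by_cases hk : 2 ≤ k
    swap
    · obtain rfl : k = 1 := by omega
      have := DD_le w h 4 R (fun u _ v _ _ => h.le4 u v)
      rw [hR] at this
      omega
    have e : (k + 3) ^ 2 = k ^ 2 + 6 * k + 9 := by ring
    have h2 := fl_step3 k
    rw [e] at h2 ⊢
    by_cases hall : ∀ r ∈ R, 9 ≤ w r a + w r b + w r c
    · have h1 := DD_le w h 1 R (by
        intro u hu v hv huv
        obtain ⟨_, u1, u2, u3⟩ := hmem u hu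
        obtain ⟨_, v1, v2, v3⟩ := hmem v hv
        have t1 := tight w h hab hac u1 hbc u2 u3 x1 x2 x3 (hall u hu)
        have t2 := tight w h hab hac v1 hbc v2 v3 x1 x2 x3 (hall v hv)
        have := four_le w h hbc u2 v2 u3 v3 huv
        rw [h.symm b u, h.symm c u, h.symm v u] at this
        omega)
      rw [hR] at h1
      obtain ⟨j, rfl⟩ := Nat.exists_eq_add_of_le' hk
      have e1 : j + 2 - 1 = j + 1 := by omega
      rw [e1] at h1
      have e3 : (j + 2) ^ 2 = j ^ 2 + 4 * j + 4 := by ring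
      have e4 : (j + 2) * ((j + 1) * 1) = j ^ 2 + 3 * j + 2 := by ring
      rw [e4] at h1
      rw [e3] at h2 ⊢
      omega
    · push Not at hall
      obtain ⟨r, hr, hr9⟩ := hall
      have hs' : ∑ r ∈ R, (w r a + w r b + w r c) < ∑ r ∈ R, 9 :=
        Finset.sum_lt_sum hle ⟨r, hr, hr9⟩
      rw [Finset.sum_const, hR, smul_eq_mul] at hs'
      have h1 := rest k R rfl hR hk
      split_ifs at h1 with hk3
      · subst hk3
        obtain ⟨p, q, s, hpq, hps, hqs, rfl⟩ := Finset.card_eq_three.1 hR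
        rw [DD_three w h hpq hps hqs] at hD
        have := h12 p (hRS (by simp)) q (hRS (by simp)) s (hRS (by simp)) hpq hps hqs
        omega
      · omega

end

section
variable {n : ℕ} (G : Fin 4 → SimpleGraph (Fin n))

open Classical in
noncomputable def cset (u v : Fin n) : Finset (Fin 4) := Finset.univ.filter fun i => (G i).Adj u v

theorem cset_good (hG : ¬ HasThreeCrossingPairs G) : WGood fun u v => (cset G u v).card where
  symm u v := congrArg Finset.card (by ext i; simp [cset, SimpleGraph.adj_comm (G i) u v])
  self u := by simp [cset]
  le4 u v := by simpa using Finset.card_le_univ (cset G u v)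
  four a b c d hab hac had hbc hbd hcd := by
    have key : ∀ P Q : Finset (Fin 4), P.card + Q.card ≤ 4 + (P ∩ Q).card := by
      intro P Q
      have := Finset.card_union_add_card_inter P Q
      have := Finset.card_le_univ (P ∪ Q)
      simp only [Fintype.card_fin] at this
      omega
    refine ⟨_, _, _, key _ _, key _ _, key _ _, sdr_num _ _ _ ?_⟩
    rintro ⟨p, hp, q, hq, r, hr, hpq, hpr, hqr⟩
    simp only [cset, Finset.mem_inter, Finset.mem_filter, Finset.mem_univ, true_and] at hp hq hr
    exact hG ⟨p, q, r, hpq, hpr, hqr, a, b, c, d, hab, hac, had, hbc, hbd, hcd,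
      hp.1, hp.2, hq.1, hq.2, hr.1, hr.2⟩

theorem DD_cset : DD (fun u v => (cset G u v).card) Finset.univ
    = 2 * ∑ i, (G i).edgeSet.ncard := by
  classical
  have h1 : ∀ i, 2 * (G i).edgeSet.ncard = ∑ u, ∑ v, if (G i).Adj u v then 1 else 0 := by
    intro i
    rw [← SimpleGraph.coe_edgeFinset, Set.ncard_coe_finset, ← SimpleGraph.sum_degrees_eq_twice_card_edges]
    refine Finset.sum_congr rfl fun u _ => ?_
    rw [← SimpleGraph.card_neighborFinset_eq_degree, SimpleGraph.neighborFinset_eq_filter,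
      Finset.card_filter]
  rw [Finset.mul_sum, Finset.sum_congr rfl fun i _ => h1 i, Finset.sum_comm]
  unfold DD
  refine Finset.sum_congr rfl fun u _ => ?_
  rw [Finset.sum_comm]
  refine Finset.sum_congr rfl fun v _ => ?_
  simp only [cset, Finset.card_filter]
  
end

/-- the extremal construction -/
def exG (n : ℕ) (i : Fin 4) : SimpleGraph (Fin n) where
  Adj u v := u ≠ v ∧ ((u.val < n / 2 ↔ ¬ v.val < n / 2) ∨
    (u.val < n / 2 ∧ v.val < n / 2 ∧ i.val < 2) ∨ (¬ u.val < n / 2 ∧ ¬ v.val < n / 2 ∧ 2 ≤ i.val))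
  symm := ⟨fun u v => by rintro ⟨h, h'⟩; exact ⟨h.symm, by tauto⟩⟩
  loopless := ⟨fun u h => h.1 rfl⟩

theorem exG_free (n : ℕ) : ¬ HasThreeCrossingPairs (exG n) := by
  rintro ⟨i, j, k, hij, hik, hjk, w, x, y, z, -, -, -, -, -, -, h1, h2, h3, h4, h5, h6⟩
  have h1 := h1.2
  have h2 := h2.2
  have h3 := h3.2
  have h4 := h4.2
  have h5 := h5.2
  have h6 := h6.2
  have hij : i.val ≠ j.val := fun h => hij (Fin.ext h)
  have hik : i.val ≠ k.val := fun h => hik (Fin.ext h)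
  have hjk : j.val ≠ k.val := fun h => hjk (Fin.ext h)
  have := i.2
  have := j.2
  have := k.2
  by_cases hw : w.val < n / 2 <;> by_cases hx : x.val < n / 2 <;> by_cases hy : y.val < n / 2 <;>
    by_cases hz : z.val < n / 2 <;> simp only [hw, hx, hy, hz, not_true, not_false_iff, iff_true,
      iff_false, true_and, false_and, false_or, or_false, true_or] at h1 h2 h3 h4 h5 h6 <;> omega

theorem exG_w (n : ℕ) (u v : Fin n) : (cset (exG n) u v).card + (if u = v then 2 else 0) =
    2 + 2 * ((if u.val < n / 2 then 1 else 0) * (if v.val < n / 2 then 0 else 1) +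
      (if u.val < n / 2 then 0 else 1) * (if v.val < n / 2 then 1 else 0)) := by
  classical
  by_cases huv : u = v
  · subst huv
    by_cases hu : u.val < n / 2 <;> simp [cset, hu]
  · have e : cset (exG n) u v = Finset.univ.filter fun i : Fin 4 =>
      ((u.val < n / 2 ↔ ¬ v.val < n / 2) ∨
      (u.val < n / 2 ∧ v.val < n / 2 ∧ i.val < 2) ∨
      (¬ u.val < n / 2 ∧ ¬ v.val < n / 2 ∧ 2 ≤ i.val)) := by
      ext i; simp [cset, exG, huv]
    rw [e]
    by_cases hu : u.val < n / 2 <;> by_cases hv : v.val < n / 2 <;> simp [hu, hv, huv] <;> decide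

theorem exG_count (n : ℕ) : DD (fun u v => (cset (exG n) u v).card) Finset.univ + 2 * n
    = 2 * n ^ 2 + 4 * (n ^ 2 / 4) := by
  have hA : ∑ u : Fin n, (if u.val < n / 2 then 1 else 0) = n / 2 := by
    rw [Fin.sum_univ_eq_sum_range (fun i => if i < n / 2 then 1 else 0), ← Finset.card_filter]
    have : (Finset.range n).filter (fun i => i < n / 2) = Finset.range (n / 2) := by
      ext i; simp; omega
    rw [this, Finset.card_range]
  have hAB : ∑ u : Fin n, (if u.val < n / 2 then 1 else 0) +
      ∑ u : Fin n, (if u.val < n / 2 then 0 else 1) = n := by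
    rw [← Finset.sum_add_distrib, Finset.sum_congr rfl (g := fun _ => 1)]
    · simp
    · intro u _; split_ifs <;> rfl
  have hs : DD (fun u v => (cset (exG n) u v).card) Finset.univ + 2 * n =
      ∑ u : Fin n, ∑ v : Fin n, ((cset (exG n) u v).card + (if u = v then 2 else 0)) := by
    simp only [Finset.sum_add_distrib, DD]
    simp [mul_comm]
  rw [hs]
  simp only [exG_w, Finset.sum_add_distrib, ← Finset.mul_sum, ← Finset.sum_mul]
  rw [hA] at *
  have hB : ∑ u : Fin n, (if u.val < n / 2 then 0 else 1) = n - n / 2 := by omega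
  rw [hB]
  simp only [Finset.sum_const, Finset.card_univ, Fintype.card_fin, smul_eq_mul]
  rcases Nat.even_or_odd' n with ⟨m, rfl | rfl⟩
  · have e1 : (2 * m) ^ 2 = 4 * m ^ 2 := by ring
    have e2 : 2 * m / 2 = m := by omega
    have e3 : 2 * m - m = m := by omega
    have e4 : 4 * m ^ 2 / 4 = m ^ 2 := by omega
    rw [e1, e2, e3, e4]; ring
  · have e1 : (2 * m + 1) ^ 2 = 4 * (m ^ 2 + m) + 1 := by ring
    have e2 : (4 * (m ^ 2 + m) + 1) / 4 = m ^ 2 + m := by omega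
    have e3 : (2 * m + 1) / 2 = m := by omega
    have e4 : 2 * m + 1 - m = m + 1 := by omega
    rw [e1, e2, e3, e4]; ring

theorem choose_aux (n : ℕ) : 2 * n.choose 2 + n = n ^ 2 := by
  rcases n with _ | n
  · rfl
  · have h1 := Nat.choose_two_right (n + 1)
    have h2 := Nat.triangle_succ n
    have h3 := Nat.even_mul_succ_self n
    have h4 : (n + 1) * n = n * (n + 1) := by ring
    have h5 : (n + 1) ^ 2 = n * (n + 1) + (n + 1) := by ring
    simp only [Nat.add_sub_cancel] at h1
    rw [h4] at h1
    obtain ⟨r, hr⟩ := h3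
    omega

/-- Füredi–Simonovits: for `n ≥ 4` the maximum total number of edges of a `4`-multigraph
on `n` vertices without three crossing pairs equals `2·C(n,2) + 2·⌊n²/4⌋`. -/
theorem f4_value (n : ℕ) (hn : 4 ≤ n) :
    IsGreatest {m : ℕ | ∃ G : Fin 4 → SimpleGraph (Fin n),
        ¬ HasThreeCrossingPairs G ∧ ∑ i, (G i).edgeSet.ncard = m}
      (2 * n.choose 2 + 2 * (n ^ 2 / 4)) := by
  have hc := choose_aux n
  constructor
  · refine ⟨exG n, exG_free n, ?_⟩
    have h1 := exG_count n
    rw [DD_cset] at h1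
    omega
  · rintro m ⟨G, hG, rfl⟩
    have h1 := mainW _ (cset_good G hG) n Finset.univ (by simp) hn
    rw [DD_cset] at h1
    omega
end

section
/- Let (G_1, …, G_5) be a 5-multigraph on four vertices not containing three crossing pairs, with total number of edges e ≥ 23. Then there exists an enumeration {w, x, y, z} of the four vertices such that the multiplicity of the pair wx plus the multiplicity of the pair yz is at most 5. -/
theorem sdr_aux_s12 (A B C : Finset (Fin 5)) (hA : 1 ≤ A.card) (hB : 2 ≤ B.card) (hC : 3 ≤ C.card) :
    ∃ i ∈ A, ∃ j ∈ B, ∃ k ∈ C, i ≠ j ∧ i ≠ k ∧ j ≠ k := by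
  obtain ⟨i, hi⟩ := Finset.card_pos.mp hA
  obtain ⟨j, hj, hji⟩ := Finset.exists_mem_ne (s := B) (by omega) i
  have h2 : ({i, j} : Finset (Fin 5)).card < C.card :=
    lt_of_le_of_lt Finset.card_le_two (by omega)
  obtain ⟨k, hk, hk'⟩ := Finset.exists_mem_notMem_of_card_lt_card h2
  simp only [Finset.mem_insert, Finset.mem_singleton, not_or] at hk'
  exact ⟨i, hi, j, hj, k, hk, fun h => hji h.symm, fun h => hk'.1 h.symm, fun h => hk'.2 h.symm⟩

theorem sdr_sym (A B C : Finset (Fin 5)) (hA : 1 ≤ A.card) (hB : 1 ≤ B.card) (hC : 1 ≤ C.card)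
    (h : 8 ≤ A.card + B.card + C.card) :
    ∃ i ∈ A, ∃ j ∈ B, ∃ k ∈ C, i ≠ j ∧ i ≠ k ∧ j ≠ k := by
  have a5 : A.card ≤ 5 := by simpa using A.card_le_univ
  have b5 : B.card ≤ 5 := by simpa using B.card_le_univ
  have c5 : C.card ≤ 5 := by simpa using C.card_le_univ
  have : (2 ≤ B.card ∧ 3 ≤ C.card) ∨ (2 ≤ C.card ∧ 3 ≤ B.card) ∨ (2 ≤ A.card ∧ 3 ≤ C.card) ∨
      (2 ≤ C.card ∧ 3 ≤ A.card) ∨ (2 ≤ A.card ∧ 3 ≤ B.card) ∨ (2 ≤ B.card ∧ 3 ≤ A.card) := by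
    omega
  rcases this with h | h | h | h | h | h
  · obtain ⟨i, hi, j, hj, k, hk, h1, h2, h3⟩ := sdr_aux_s12 A B C hA h.1 h.2
    exact ⟨i, hi, j, hj, k, hk, h1, h2, h3⟩
  · obtain ⟨i, hi, k, hk, j, hj, h1, h2, h3⟩ := sdr_aux_s12 A C B hA h.1 h.2
    exact ⟨i, hi, j, hj, k, hk, h2, h1, h3.symm⟩
  · obtain ⟨j, hj, i, hi, k, hk, h1, h2, h3⟩ := sdr_aux_s12 B A C hB h.1 h.2
    exact ⟨i, hi, j, hj, k, hk, h1.symm, h3, h2⟩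
  · obtain ⟨j, hj, k, hk, i, hi, h1, h2, h3⟩ := sdr_aux_s12 B C A hB h.1 h.2
    exact ⟨i, hi, j, hj, k, hk, h2.symm, h3.symm, h1⟩
  · obtain ⟨k, hk, i, hi, j, hj, h1, h2, h3⟩ := sdr_aux_s12 C A B hC h.1 h.2
    exact ⟨i, hi, j, hj, k, hk, h3, h1.symm, h2.symm⟩
  · obtain ⟨k, hk, j, hj, i, hi, h1, h2, h3⟩ := sdr_aux_s12 C B A hC h.1 h.2
    exact ⟨i, hi, j, hj, k, hk, h3.symm, h2.symm, h1.symm⟩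

open Classical in
theorem edge_count (H : SimpleGraph (Fin 4)) : H.edgeSet.ncard =
    (if H.Adj 0 1 then 1 else 0) + (if H.Adj 2 3 then 1 else 0) +
    (if H.Adj 0 2 then 1 else 0) + (if H.Adj 1 3 then 1 else 0) +
    (if H.Adj 0 3 then 1 else 0) + (if H.Adj 1 2 then 1 else 0) := by
  have h1 : H.edgeSet.ncard = H.edgeFinset.card := by
    rw [← SimpleGraph.coe_edgeFinset, Set.ncard_coe_finset]
  have h2 := H.sum_degrees_eq_twice_card_edges
  have h3 : ∀ v, H.degree v = ∑ w, if H.Adj v w then 1 else 0 := by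
    intro v
    rw [← SimpleGraph.card_neighborFinset_eq_degree, SimpleGraph.neighborFinset_eq_filter,
      Finset.card_filter]
  simp only [h3, Fin.sum_univ_four, SimpleGraph.irrefl, if_false] at h2
  rw [H.adj_comm 1 0, H.adj_comm 2 0, H.adj_comm 3 0, H.adj_comm 2 1, H.adj_comm 3 1,
    H.adj_comm 3 2] at h2
  rw [h1]
  omega

/-- In a `5`-multigraph on four vertices without three crossing pairs and with at least
`23` edges in total, some enumeration `w, x, y, z` of the vertices satisfies
`e(w,x) + e(y,z) ≤ 5`. -/
theorem five_multigraph_four_vertices_23 (G : Fin 5 → SimpleGraph (Fin 4))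
    (hG : ¬ HasThreeCrossingPairs G) (he : 23 ≤ ∑ i, (G i).edgeSet.ncard) :
    ∃ w x y z : Fin 4, w ≠ x ∧ w ≠ y ∧ w ≠ z ∧ x ≠ y ∧ x ≠ z ∧ y ≠ z ∧
      {i : Fin 5 | (G i).Adj w x}.ncard + {i : Fin 5 | (G i).Adj y z}.ncard ≤ 5 := by
  classical
  by_contra! hcon
  have hn : ∀ a b : Fin 4, {i : Fin 5 | (G i).Adj a b}.ncard =
      (Finset.univ.filter fun i => (G i).Adj a b).card := by
    intro a b
    rw [← Set.ncard_coe_finset]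
    simp
  have key : ∀ a b c d : Fin 4, (Finset.univ.filter fun i => (G i).Adj a b).card +
      (Finset.univ.filter fun i => (G i).Adj c d).card ≤ 5 +
      ((Finset.univ.filter fun i => (G i).Adj a b) ∩
        (Finset.univ.filter fun i => (G i).Adj c d)).card := by
    intro a b c d
    rw [← Finset.card_union_add_card_inter]
    have := Finset.card_le_univ ((Finset.univ.filter fun i => (G i).Adj a b) ∪
      (Finset.univ.filter fun i => (G i).Adj c d))
    rw [Fintype.card_fin] at this
    omega
  simp only [edge_count, Finset.sum_add_distrib, ← Finset.card_filter] at he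
  have c1 := hcon 0 1 2 3 (by decide) (by decide) (by decide) (by decide) (by decide) (by decide)
  have c2 := hcon 0 2 1 3 (by decide) (by decide) (by decide) (by decide) (by decide) (by decide)
  have c3 := hcon 0 3 1 2 (by decide) (by decide) (by decide) (by decide) (by decide) (by decide)
  rw [hn, hn] at c1 c2 c3
  have k1 := key 0 1 2 3
  have k2 := key 0 2 1 3
  have k3 := key 0 3 1 2
  obtain ⟨i, hi, j, hj, k, hk, h1, h2, h3⟩ :=
    sdr_sym _ _ _ (by omega) (by omega) (by omega)
      (show 8 ≤ ((Finset.univ.filter fun i => (G i).Adj 0 1) ∩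
        (Finset.univ.filter fun i => (G i).Adj 2 3)).card +
        ((Finset.univ.filter fun i => (G i).Adj 0 2) ∩
        (Finset.univ.filter fun i => (G i).Adj 1 3)).card +
        ((Finset.univ.filter fun i => (G i).Adj 0 3) ∩
        (Finset.univ.filter fun i => (G i).Adj 1 2)).card by omega)
  simp only [Finset.mem_inter, Finset.mem_filter, Finset.mem_univ, true_and] at hi hj hk
  exact hG ⟨i, j, k, h1, h2, h3, 0, 1, 2, 3, by decide, by decide, by decide, by decide,
    by decide, by decide, hi.1, hi.2, hj.1, hj.2, hk.1, hk.2⟩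
end

section
/- The maximum total number of edges of a 5-multigraph on 4 vertices without three crossing pairs equals 25, and the maximum total number of edges of a 5-multigraph on 5 vertices without three crossing pairs equals 40. -/
open Classical in
/-- edge indicator -/
noncomputable def edgeInd {V : Type*} (G : SimpleGraph V) (u v : V) : ℕ :=
  if G.Adj u v then 1 else 0

/-- number of edges among four vertices -/
noncomputable def quad {V : Type*} (G : SimpleGraph V) (w x y z : V) : ℕ :=
  (edgeInd G w x + edgeInd G y z) + (edgeInd G w y + edgeInd G x z)
    + (edgeInd G w z + edgeInd G x y)

lemma edgeInd_le {V : Type*} (G : SimpleGraph V) (u v : V) : edgeInd G u v ≤ 1 := by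
  unfold edgeInd; split_ifs <;> simp

lemma hall3 (X : Fin 3 → Finset (Fin 5))
    (h : ¬ ∃ f : Fin 3 → Fin 5, Function.Injective f ∧ ∀ t, f t ∈ X t) :
    (X 0).card + (X 1).card + (X 2).card ≤ 10 ∧
    (8 ≤ (X 0).card + (X 1).card + (X 2).card → ∃ t, X t = ∅) := by
  rw [← Finset.all_card_le_biUnion_card_iff_exists_injective] at h
  push Not at h
  obtain ⟨s, hs⟩ := h
  have b : ∀ t, (X t).card ≤ 5 := fun t => by simpa using Finset.card_le_univ (X t)
  have hsub : ∀ t ∈ s, (X t).card < s.card := fun t ht =>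
    lt_of_le_of_lt (Finset.card_le_card (Finset.subset_biUnion_of_mem X ht)) hs
  have hs3 : s.card ≤ 3 := by simpa using Finset.card_le_univ s
  have b0 := b 0
  have b1 := b 1
  have b2 := b 2
  by_cases he : ∃ t, X t = ∅
  · refine ⟨?_, fun _ => he⟩
    obtain ⟨t, ht⟩ := he
    have : (X t).card = 0 := by simp [ht]
    fin_cases t <;> simp at this <;> simp [this] at * <;> omega
  · suffices (X 0).card + (X 1).card + (X 2).card ≤ 7 by
      exact ⟨by omega, fun h => by omega⟩
    have hpos : ∀ t ∈ s, 2 ≤ s.card := fun t ht => by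
      have h1 := hsub t ht
      have : (X t).card ≠ 0 := fun h => he ⟨t, Finset.card_eq_zero.mp h⟩
      omega
    have key : ∀ s : Finset (Fin 3), (∀ t ∈ s, 2 ≤ s.card) → s ≠ ∅ →
      s = {0,1} ∨ s = {0,2} ∨ s = {1,2} ∨ s = {0,1,2} := by decide
    have hne : s ≠ ∅ := by rintro rfl; simp at hs
    rcases key s hpos hne with rfl | rfl | rfl | rfl
    · have h0 := hsub 0 (by decide); have h1 := hsub 1 (by decide)
      simp at h0 h1; omega
    · have h0 := hsub 0 (by decide); have h1 := hsub 2 (by decide)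
      simp at h0 h1; omega
    · have h0 := hsub 1 (by decide); have h1 := hsub 2 (by decide)
      simp at h0 h1; omega
    · have h0 := hsub 0 (by decide); have h1 := hsub 1 (by decide)
      have h2 := hsub 2 (by decide)
      have e3 : ({0,1,2} : Finset (Fin 3)).card = 3 := rfl
      omega

open Classical in
lemma sum_pair {V : Type*} (G : Fin 5 → SimpleGraph V) (a b c d : V) :
    ∑ i, (edgeInd (G i) a b + edgeInd (G i) c d) ≤
      5 + (Finset.univ.filter (fun i => (G i).Adj a b ∧ (G i).Adj c d)).card := by
  rw [Finset.card_filter]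
  have h5 : ∀ f : Fin 5 → ℕ, 5 + ∑ i, f i = ∑ i, (1 + f i) := by
    intro f; simp [Finset.sum_add_distrib]
  rw [h5]
  apply Finset.sum_le_sum
  intro i _
  unfold edgeInd
  by_cases h1 : (G i).Adj a b <;> by_cases h2 : (G i).Adj c d <;> simp [h1, h2]

lemma quad_bound {V : Type*} (G : Fin 5 → SimpleGraph V) (hG : ¬ HasThreeCrossingPairs G)
    (w x y z : V) (hd : w ≠ x ∧ w ≠ y ∧ w ≠ z ∧ x ≠ y ∧ x ≠ z ∧ y ≠ z) :
    ∑ i, quad (G i) w x y z ≤ 25 ∧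
    (23 ≤ ∑ i, quad (G i) w x y z → ∀ i, quad (G i) w x y z ≤ 5) := by
  classical
  let X : Fin 3 → Finset (Fin 5) :=
    ![Finset.univ.filter (fun i => (G i).Adj w x ∧ (G i).Adj y z),
      Finset.univ.filter (fun i => (G i).Adj w y ∧ (G i).Adj x z),
      Finset.univ.filter (fun i => (G i).Adj w z ∧ (G i).Adj x y)]
  have hX : ¬ ∃ f : Fin 3 → Fin 5, Function.Injective f ∧ ∀ t, f t ∈ X t := by
    rintro ⟨f, hf, hm⟩
    have m0 := hm 0
    have m1 := hm 1
    have m2 := hm 2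
    simp [X] at m0 m1 m2
    obtain ⟨d1, d2, d3, d4, d5, d6⟩ := hd
    exact hG ⟨f 0, f 1, f 2, hf.ne (by decide), hf.ne (by decide), hf.ne (by decide),
      w, x, y, z, d1, d2, d3, d4, d5, d6, m0.1, m0.2, m1.1, m1.2, m2.1, m2.2⟩
  obtain ⟨h1, h2⟩ := hall3 X hX
  have s0 : _ ≤ 5 + (X 0).card := sum_pair G w x y z
  have s1 : _ ≤ 5 + (X 1).card := sum_pair G w y x z
  have s2 : _ ≤ 5 + (X 2).card := sum_pair G w z x y
  have e : ∑ i, quad (G i) w x y z = ∑ i, (edgeInd (G i) w x + edgeInd (G i) y z)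
      + ∑ i, (edgeInd (G i) w y + edgeInd (G i) x z)
      + ∑ i, (edgeInd (G i) w z + edgeInd (G i) x y) := by
    rw [← Finset.sum_add_distrib, ← Finset.sum_add_distrib]; rfl
  refine ⟨by omega, fun h i => ?_⟩
  obtain ⟨t, ht⟩ := h2 (by omega)
  have hi : i ∉ X t := by simp [ht]
  have l1 := edgeInd_le (G i) w x
  have l2 := edgeInd_le (G i) y z
  have l3 := edgeInd_le (G i) w y
  have l4 := edgeInd_le (G i) x z
  have l5 := edgeInd_le (G i) w z
  have l6 := edgeInd_le (G i) x y
  have aux : ∀ a b c d : V, ¬ ((G i).Adj a b ∧ (G i).Adj c d) →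
      edgeInd (G i) a b + edgeInd (G i) c d ≤ 1 := by
    intro a b c d h
    unfold edgeInd
    by_cases h1 : (G i).Adj a b <;> by_cases h2 : (G i).Adj c d <;> simp_all
  unfold quad
  fin_cases t
  · have := aux w x y z (by simpa [X] using hi)
    omega
  · have := aux w y x z (by simpa [X] using hi)
    omega
  · have := aux w z x y (by simpa [X] using hi)
    omega

lemma two_mul_ncard {n : ℕ} (G : SimpleGraph (Fin n)) :
    2 * G.edgeSet.ncard = ∑ u, ∑ v, edgeInd G u v := by
  classical
  rw [← SimpleGraph.coe_edgeFinset, Set.ncard_coe_finset,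
    ← SimpleGraph.sum_degrees_eq_twice_card_edges]
  refine Finset.sum_congr rfl fun u _ => ?_
  rw [← SimpleGraph.card_neighborFinset_eq_degree, SimpleGraph.neighborFinset_eq_filter,
    Finset.card_filter]
  unfold edgeInd
  refine Finset.sum_congr rfl fun v _ => ?_
  congr

lemma edgeInd_comm {V : Type*} (G : SimpleGraph V) (u v : V) :
    edgeInd G u v = edgeInd G v u := by
  unfold edgeInd
  by_cases h : G.Adj u v
  · simp [h, h.symm]
  · have h2 : ¬ G.Adj v u := fun k => h k.symm
    simp [h, h2]

lemma edgeInd_self {V : Type*} (G : SimpleGraph V) (u : V) : edgeInd G u u = 0 := by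
  simp [edgeInd]

lemma ncard4 (G : SimpleGraph (Fin 4)) : G.edgeSet.ncard = quad G 0 1 2 3 := by
  have h := two_mul_ncard G
  simp only [Fin.sum_univ_four, edgeInd_self, edgeInd_comm G 1 0, edgeInd_comm G 2 0,
    edgeInd_comm G 3 0, edgeInd_comm G 2 1, edgeInd_comm G 3 1, edgeInd_comm G 3 2] at h
  unfold quad
  omega

lemma ncard5 (G : SimpleGraph (Fin 5)) : 3 * G.edgeSet.ncard =
    quad G 0 1 2 3 + quad G 0 1 2 4 + quad G 0 1 3 4 + quad G 0 2 3 4 + quad G 1 2 3 4 := by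
  have h := two_mul_ncard G
  simp only [Fin.sum_univ_five, edgeInd_self, edgeInd_comm G 1 0, edgeInd_comm G 2 0,
    edgeInd_comm G 3 0, edgeInd_comm G 2 1, edgeInd_comm G 3 1, edgeInd_comm G 3 2,
    edgeInd_comm G 4 0, edgeInd_comm G 4 1, edgeInd_comm G 4 2, edgeInd_comm G 4 3] at h
  unfold quad
  omega

/-- extremal graph on 4 vertices -/
def ex4 : SimpleGraph (Fin 4) where
  Adj u v := u ≠ v ∧ ¬ (u.val + v.val = 1)
  symm := ⟨by decide⟩
  loopless := ⟨by decide⟩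

/-- extremal graph on 5 vertices -/
def ex5 : SimpleGraph (Fin 5) where
  Adj u v := u ≠ v ∧ ¬ (u.val + v.val = 1) ∧ ¬ (u.val + v.val = 5 ∧ u.val * v.val = 6)
  symm := ⟨by decide⟩
  loopless := ⟨by decide⟩

instance : DecidableRel ex4.Adj := fun u v =>
  inferInstanceAs (Decidable (u ≠ v ∧ ¬ (u.val + v.val = 1)))

instance : DecidableRel ex5.Adj := fun u v =>
  inferInstanceAs (Decidable
    (u ≠ v ∧ ¬ (u.val + v.val = 1) ∧ ¬ (u.val + v.val = 5 ∧ u.val * v.val = 6)))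

lemma ex4_free : ∀ w x y z : Fin 4, ¬ (ex4.Adj w x ∧ ex4.Adj y z ∧ ex4.Adj w y ∧ ex4.Adj x z
    ∧ ex4.Adj w z ∧ ex4.Adj x y) := by
  decide

set_option maxRecDepth 10000 in
lemma ex5_free : ∀ w x y z : Fin 5, ¬ (ex5.Adj w x ∧ ex5.Adj y z ∧ ex5.Adj w y ∧ ex5.Adj x z
    ∧ ex5.Adj w z ∧ ex5.Adj x y) := by
  decide

lemma ex4_card : ex4.edgeSet.ncard = 5 := by
  rw [ncard4]
  simp [quad, edgeInd, ex4]

lemma ex5_card : ex5.edgeSet.ncard = 8 := by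
  have h := ncard5 ex5
  have h2 : quad ex5 0 1 2 3 + quad ex5 0 1 2 4 + quad ex5 0 1 3 4 + quad ex5 0 2 3 4
      + quad ex5 1 2 3 4 = 24 := by
    simp [quad, edgeInd, ex5]
  omega

/-- `f₅(4) = 25` and `f₅(5) = 40`: the maximum total number of edges of a `5`-multigraph
without three crossing pairs on `4` resp. `5` vertices. -/
theorem f5_four_and_five :
    IsGreatest {m : ℕ | ∃ G : Fin 5 → SimpleGraph (Fin 4),
        ¬ HasThreeCrossingPairs G ∧ ∑ i, (G i).edgeSet.ncard = m} 25 ∧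
    IsGreatest {m : ℕ | ∃ G : Fin 5 → SimpleGraph (Fin 5),
        ¬ HasThreeCrossingPairs G ∧ ∑ i, (G i).edgeSet.ncard = m} 40 := by
  refine ⟨⟨⟨fun _ => ex4, ?_, ?_⟩, ?_⟩, ⟨⟨fun _ => ex5, ?_, ?_⟩, ?_⟩⟩
  · rintro ⟨i, j, k, -, -, -, w, x, y, z, -, -, -, -, -, -, h⟩
    exact ex4_free w x y z h
  · simp [ex4_card]
  · rintro m ⟨G, hG, rfl⟩
    simp only [ncard4]
    exact (quad_bound G hG 0 1 2 3 (by decide)).1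
  · rintro ⟨i, j, k, -, -, -, w, x, y, z, -, -, -, -, -, -, h⟩
    exact ex5_free w x y z h
  · simp [ex5_card]
  · rintro m ⟨G, hG, rfl⟩
    by_contra hlt
    have q1 := quad_bound G hG 0 1 2 3 (by decide)
    have q2 := quad_bound G hG 0 1 2 4 (by decide)
    have q3 := quad_bound G hG 0 1 3 4 (by decide)
    have q4 := quad_bound G hG 0 2 3 4 (by decide)
    have q5 := quad_bound G hG 1 2 3 4 (by decide)
    have tot : 3 * ∑ i, (G i).edgeSet.ncard = ∑ i, quad (G i) 0 1 2 3
        + ∑ i, quad (G i) 0 1 2 4 + ∑ i, quad (G i) 0 1 3 4 + ∑ i, quad (G i) 0 2 3 4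
        + ∑ i, quad (G i) 1 2 3 4 := by
      rw [Finset.mul_sum]
      simp only [ncard5, Finset.sum_add_distrib]
    have each : ∀ i ∈ (Finset.univ : Finset (Fin 5)), (G i).edgeSet.ncard ≤ 8 := by
      intro i _
      have := ncard5 (G i)
      have r1 := q1.2 (by omega) i
      have r2 := q2.2 (by omega) i
      have r3 := q3.2 (by omega) i
      have r4 := q4.2 (by omega) i
      have r5 := q5.2 (by omega) i
      omega
    have := Finset.sum_le_card_nsmul _ _ _ each
    simp at this
    omega
end

section
/- For every n ≥ 4 there exists a 5-multigraph on n vertices not containing three crossing pairs whose total number of edges is at least max(5·⌊n²/3⌋, 2·C(n,2) + 3·⌊n²/4⌋). -/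
theorem ncard_turan (n r : ℕ) : (SimpleGraph.turanGraph n r).edgeSet.ncard =
    (n ^ 2 - (n % r) ^ 2) * (r - 1) / (2 * r) + (n % r).choose 2 := by
  rw [← SimpleGraph.card_edgeFinset_turanGraph, ← SimpleGraph.coe_edgeFinset, Set.ncard_coe_finset]

theorem ncard_turan3 (n : ℕ) : n ^ 2 / 3 ≤ (SimpleGraph.turanGraph n 3).edgeSet.ncard := by
  rw [ncard_turan]
  obtain ⟨q, s, hs, rfl⟩ : ∃ q s, s < 3 ∧ n = 3 * q + s :=
    ⟨n / 3, n % 3, Nat.mod_lt _ (by norm_num), by omega⟩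
  have h : (3 * q + s) % 3 = s := by omega
  rw [h]
  have e : (3 * q + s) ^ 2 = 9 * (q * q) + 6 * (q * s) + s ^ 2 := by ring
  rw [e]
  interval_cases s <;> simp [Nat.choose] <;> omega

theorem ncard_turan2 (n : ℕ) : n ^ 2 / 4 ≤ (SimpleGraph.turanGraph n 2).edgeSet.ncard := by
  rw [ncard_turan]
  obtain ⟨q, s, hs, rfl⟩ : ∃ q s, s < 2 ∧ n = 2 * q + s :=
    ⟨n / 2, n % 2, Nat.mod_lt _ (by norm_num), by omega⟩
  have h : (2 * q + s) % 2 = s := by omega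
  rw [h]
  have e : (2 * q + s) ^ 2 = 4 * (q * q) + 4 * (q * s) + s ^ 2 := by ring
  rw [e]
  interval_cases s <;> simp [Nat.choose] <;> omega

/-- All edges except those with both ends of parity `c`. -/
def exceptGraph (n c : ℕ) : SimpleGraph (Fin n) where
  Adj u v := u ≠ v ∧ ¬ ((u : ℕ) % 2 = c ∧ (v : ℕ) % 2 = c)
  symm := ⟨fun _ _ h => ⟨h.1.symm, fun k => h.2 ⟨k.2, k.1⟩⟩⟩
  loopless := ⟨fun _ h => h.1 rfl⟩

theorem except_sum (n : ℕ) : (exceptGraph n 0).edgeSet.ncard + (exceptGraph n 1).edgeSet.ncard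
    = n.choose 2 + (SimpleGraph.turanGraph n 2).edgeSet.ncard := by
  have h1 : exceptGraph n 0 ⊔ exceptGraph n 1 = ⊤ := by
    ext u v
    simp only [exceptGraph, SimpleGraph.sup_adj, SimpleGraph.top_adj]
    constructor
    · rintro (h | h) <;> exact h.1
    · intro h
      by_cases hu : (u : ℕ) % 2 = 0
      · right; exact ⟨h, by omega⟩
      · left; exact ⟨h, by omega⟩
  have h2 : exceptGraph n 0 ⊓ exceptGraph n 1 = SimpleGraph.turanGraph n 2 := by
    ext u v
    simp only [exceptGraph, SimpleGraph.inf_adj, SimpleGraph.turanGraph]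
    constructor
    · rintro ⟨h, h'⟩; omega
    · intro h
      have : u ≠ v := by rintro rfl; exact h rfl
      exact ⟨⟨this, by omega⟩, ⟨this, by omega⟩⟩
  have h3 : (⊤ : SimpleGraph (Fin n)).edgeSet.ncard = n.choose 2 := by
    rw [← SimpleGraph.coe_edgeFinset, Set.ncard_coe_finset, SimpleGraph.card_edgeFinset_top_eq_card_choose_two,
      Fintype.card_fin]
  rw [← Set.ncard_union_add_ncard_inter _ _ (Set.toFinite _) (Set.toFinite _),
    ← SimpleGraph.edgeSet_sup, ← SimpleGraph.edgeSet_inf, h1, h2, h3]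

theorem construction_one (n : ℕ) :
    ¬ HasThreeCrossingPairs (fun _ : Fin 5 => SimpleGraph.turanGraph n 3) := by
  rintro ⟨i, j, k, -, -, -, w, x, y, z, -, -, -, -, -, -, h1, h2, h3, h4, h5, h6⟩
  simp only [SimpleGraph.turanGraph] at h1 h2 h3 h4 h5 h6
  omega

set_option maxHeartbeats 4000000 in
theorem construction_two (n : ℕ) :
    ¬ HasThreeCrossingPairs ![exceptGraph n 0, exceptGraph n 0, exceptGraph n 1,
      exceptGraph n 1, SimpleGraph.turanGraph n 2] := by
  rintro ⟨i, j, k, hij, hik, hjk, w, x, y, z, -, -, -, -, -, -, h1, h2, h3, h4, h5, h6⟩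
  have key : ∀ (i : Fin 5) (u v : Fin n), (![exceptGraph n 0, exceptGraph n 0, exceptGraph n 1,
      exceptGraph n 1, SimpleGraph.turanGraph n 2] i).Adj u v →
      ((i : ℕ) < 2 → (u : ℕ) % 2 = 1 ∨ (v : ℕ) % 2 = 1) ∧
      (2 ≤ (i : ℕ) → i.val < 4 → (u : ℕ) % 2 = 0 ∨ (v : ℕ) % 2 = 0) ∧
      (i.val = 4 → (u : ℕ) % 2 ≠ v % 2) := by
    intro i u v h
    fin_cases i <;> simp [exceptGraph, SimpleGraph.turanGraph] at h ⊢ <;> omega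
  replace h1 := key _ _ _ h1
  replace h2 := key _ _ _ h2
  replace h3 := key _ _ _ h3
  replace h4 := key _ _ _ h4
  replace h5 := key _ _ _ h5
  replace h6 := key _ _ _ h6
  clear key
  rcases Nat.mod_two_eq_zero_or_one w with a | a <;>
  rcases Nat.mod_two_eq_zero_or_one x with b | b <;>
  rcases Nat.mod_two_eq_zero_or_one y with c | c <;>
  rcases Nat.mod_two_eq_zero_or_one z with d | d <;>
  simp [a, b, c, d] at h1 h2 h3 h4 h5 h6 <;> omega

/-- For every `n ≥ 4` there is a `5`-multigraph on `n` vertices without three crossing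
pairs having at least `max (5·⌊n²/3⌋) (2·C(n,2) + 3·⌊n²/4⌋)` edges in total. -/
theorem f5_lower_bound (n : ℕ) (hn : 4 ≤ n) :
    ∃ G : Fin 5 → SimpleGraph (Fin n), ¬ HasThreeCrossingPairs G ∧
      max (5 * (n ^ 2 / 3)) (2 * n.choose 2 + 3 * (n ^ 2 / 4)) ≤
        ∑ i, (G i).edgeSet.ncard := by
  rcases le_total (5 * (n ^ 2 / 3)) (2 * n.choose 2 + 3 * (n ^ 2 / 4)) with h | h
  · refine ⟨_, construction_two n, ?_⟩
    rw [max_eq_right h]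
    have h1 := except_sum n
    have h2 := ncard_turan2 n
    rw [Fin.sum_univ_five]
    change _ ≤ (exceptGraph n 0).edgeSet.ncard + (exceptGraph n 0).edgeSet.ncard +
      (exceptGraph n 1).edgeSet.ncard + (exceptGraph n 1).edgeSet.ncard +
      (SimpleGraph.turanGraph n 2).edgeSet.ncard
    omega
  · refine ⟨_, construction_one n, ?_⟩
    rw [max_eq_left h]
    have h2 := ncard_turan3 n
    rw [Fin.sum_univ_five]
    omega
end

section
/- If n ≥ 9 is odd, then for every 5-multigraph on n−5 vertices without three crossing pairs with total number of edges e, one has b(n−5) + e + 7(n−5) + 10 < b(n). -/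
lemma aux_sdr {α : Type*} [DecidableEq α] (A B C : Finset α)
    (hA : 1 ≤ A.card) (hB : 2 ≤ B.card) (hC : 3 ≤ C.card) :
    ∃ i ∈ A, ∃ j ∈ B, ∃ k ∈ C, i ≠ j ∧ i ≠ k ∧ j ≠ k := by
  obtain ⟨i, hi⟩ := Finset.card_pos.mp hA
  have h1 : 0 < (B.erase i).card := by
    have := Finset.pred_card_le_card_erase (s := B) (a := i)
    omega
  obtain ⟨j, hj⟩ := Finset.card_pos.mp h1
  have h2 : 0 < ((C.erase i).erase j).card := by
    have := Finset.pred_card_le_card_erase (s := C) (a := i)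
    have := Finset.pred_card_le_card_erase (s := C.erase i) (a := j)
    omega
  obtain ⟨k, hk⟩ := Finset.card_pos.mp h2
  simp only [Finset.mem_erase] at hj hk
  exact ⟨i, hi, j, hj.2, k, hk.2.2, fun h => hj.1 h.symm, fun h => hk.2.1 h.symm,
    fun h => hk.1 h.symm⟩

lemma aux_filter {α : Type*} [DecidableEq α] (I : Finset α) (p q : α → Prop)
    [DecidablePred p] [DecidablePred q] :
    (I.filter p).card + (I.filter q).card ≤ I.card + (I.filter (fun i => p i ∧ q i)).card := by
  rw [Finset.filter_and, ← Finset.card_union_add_card_inter]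
  gcongr
  exact Finset.union_subset (Finset.filter_subset _ _) (Finset.filter_subset _ _)

open Classical in
lemma aux_four_s17 {V : Type*} (G : Fin 5 → SimpleGraph V) (hG : ¬ HasThreeCrossingPairs G)
    (I : Finset (Fin 5)) (hI : I.card = 4) (W : V → V → ℕ)
    (hW : ∀ x y, W x y = (I.filter (fun i => (G i).Adj x y)).card)
    (w x y z : V) (h1 : w ≠ x) (h2 : w ≠ y) (h3 : w ≠ z) (h4 : x ≠ y) (h5 : x ≠ z) (h6 : y ≠ z) :
    W w x + W y z + W w y + W x z + W w z + W x y ≤ 20 := by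
  by_contra hcon
  apply hG
  have a1 := aux_filter I (fun i => (G i).Adj w x) (fun i => (G i).Adj y z)
  have a2 := aux_filter I (fun i => (G i).Adj w y) (fun i => (G i).Adj x z)
  have a3 := aux_filter I (fun i => (G i).Adj w z) (fun i => (G i).Adj x y)
  rw [← hW, ← hW, hI] at a1 a2 a3
  set A := I.filter (fun i => (G i).Adj w x ∧ (G i).Adj y z) with hA
  set B := I.filter (fun i => (G i).Adj w y ∧ (G i).Adj x z) with hB
  set C := I.filter (fun i => (G i).Adj w z ∧ (G i).Adj x y) with hC
  have b1 : A.card ≤ 4 := hI ▸ Finset.card_filter_le _ _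
  have b2 : B.card ≤ 4 := hI ▸ Finset.card_filter_le _ _
  have b3 : C.card ≤ 4 := hI ▸ Finset.card_filter_le _ _
  have key : ∃ i ∈ A, ∃ j ∈ B, ∃ k ∈ C, i ≠ j ∧ i ≠ k ∧ j ≠ k := by
    by_cases c1 : A.card ≤ B.card
    · by_cases c2 : A.card ≤ C.card
      · by_cases c3 : B.card ≤ C.card
        · exact aux_sdr A B C (by omega) (by omega) (by omega)
        · obtain ⟨i, hi, k, hk, j, hj, e1, e2, e3⟩ :=
            aux_sdr A C B (by omega) (by omega) (by omega)
          exact ⟨i, hi, j, hj, k, hk, e2, e1, e3.symm⟩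
      · obtain ⟨k, hk, i, hi, j, hj, e1, e2, e3⟩ :=
            aux_sdr C A B (by omega) (by omega) (by omega)
        exact ⟨i, hi, j, hj, k, hk, e3, e1.symm, e2.symm⟩
    · by_cases c2 : B.card ≤ C.card
      · by_cases c3 : A.card ≤ C.card
        · obtain ⟨j, hj, i, hi, k, hk, e1, e2, e3⟩ :=
            aux_sdr B A C (by omega) (by omega) (by omega)
          exact ⟨i, hi, j, hj, k, hk, e1.symm, e3, e2⟩
        · obtain ⟨j, hj, k, hk, i, hi, e1, e2, e3⟩ :=
            aux_sdr B C A (by omega) (by omega) (by omega)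
          exact ⟨i, hi, j, hj, k, hk, e2.symm, e3.symm, e1⟩
      · obtain ⟨k, hk, j, hj, i, hi, e1, e2, e3⟩ :=
            aux_sdr C B A (by omega) (by omega) (by omega)
        exact ⟨i, hi, j, hj, k, hk, e3.symm, e2.symm, e1.symm⟩
  obtain ⟨i, hi, j, hj, k, hk, e1, e2, e3⟩ := key
  simp only [hA, hB, hC, Finset.mem_filter] at hi hj hk
  exact ⟨i, j, k, e1, e2, e3, w, x, y, z, h1, h2, h3, h4, h5, h6, hi.2.1, hi.2.2, hj.2.1, hj.2.2,
    hk.2.1, hk.2.2⟩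

lemma aux_insert {V : Type*} [DecidableEq V] (W : V → V → ℕ) (hs : ∀ x y, W x y = W y x)
    (h0 : ∀ x, W x x = 0) (R : Finset V) (x : V) (hx : x ∉ R) :
    ∑ u ∈ insert x R, ∑ v ∈ insert x R, W u v
      = ∑ u ∈ R, ∑ v ∈ R, W u v + 2 * ∑ v ∈ R, W x v := by
  rw [Finset.sum_insert hx, Finset.sum_insert hx, h0]
  simp only [Finset.sum_insert hx, Finset.sum_add_distrib]
  rw [Finset.sum_congr rfl (fun u _ => hs u x)]
  ring

lemma aux_main {V : Type*} [DecidableEq V] (W : V → V → ℕ) (hs : ∀ x y, W x y = W y x)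
    (h0 : ∀ x, W x x = 0) (h4 : ∀ x y, W x y ≤ 4)
    (h20 : ∀ w x y z, w ≠ x → w ≠ y → w ≠ z → x ≠ y → x ≠ z → y ≠ z →
      W w x + W y z + W w y + W x z + W w z + W x y ≤ 20) :
    ∀ (n : ℕ) (S : Finset V), S.card = n → ∑ u ∈ S, ∑ v ∈ S, W u v + n ≤ 3 * n ^ 2 := by
  intro n
  induction n using Nat.strong_induction_on with
  | _ n ih =>
  intro S hS
  by_cases hT : ∃ x ∈ S, ∃ y ∈ S, ∃ z ∈ S, x ≠ y ∧ x ≠ z ∧ y ≠ z ∧ 11 ≤ W x y + W x z + W y z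
  · obtain ⟨x, hx, y, hy, z, hz, hxy, hxz, hyz, h11⟩ := hT
    obtain ⟨R, hR, hxR, hyR, hzR⟩ : ∃ R, S = insert x (insert y (insert z R)) ∧
        x ∉ R ∧ y ∉ R ∧ z ∉ R := by
      refine ⟨((S.erase x).erase y).erase z, ?_, by simp, by simp, by simp⟩
      ext a
      simp only [Finset.mem_insert, Finset.mem_erase]
      grind
    have n1 : y ∉ insert z R := by simp [hyz, hyR]
    have n2 : x ∉ insert y (insert z R) := by simp [hxy, hxz, hxR]
    have hc : n = R.card + 3 := by
      rw [← hS, hR, Finset.card_insert_of_notMem n2, Finset.card_insert_of_notMem n1,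
        Finset.card_insert_of_notMem hzR]
    have hi := ih R.card (by omega) R rfl
    have hsum : ∑ v ∈ R, (W x v + W y v + W z v) ≤ R.card * 9 := by
      refine Finset.sum_le_card_nsmul _ _ _ fun v hv => ?_
      have := h20 v x y z (by grind) (by grind) (by grind) hxy hxz hyz
      rw [hs v x, hs v y, hs v z] at this
      omega
    simp only [Finset.sum_add_distrib] at hsum
    rw [hR, aux_insert W hs h0 _ x n2, aux_insert W hs h0 _ y n1, aux_insert W hs h0 _ z hzR,
      Finset.sum_insert n1, Finset.sum_insert hzR, Finset.sum_insert hzR, hc]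
    have := h4 x y
    have := h4 x z
    have := h4 y z
    nlinarith
  · push Not at hT
    by_cases hE : ∃ x ∈ S, ∃ y ∈ S, x ≠ y ∧ 4 ≤ W x y
    · obtain ⟨x, hx, y, hy, hxy, h4xy⟩ := hE
      obtain ⟨R, hR, hxR, hyR⟩ : ∃ R, S = insert x (insert y R) ∧ x ∉ R ∧ y ∉ R := by
        refine ⟨((S.erase x).erase y), ?_, by simp, by simp⟩
        ext a
        simp only [Finset.mem_insert, Finset.mem_erase]
        grind
      have n2 : x ∉ insert y R := by simp [hxy, hxR]
      have hc : n = R.card + 2 := by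
        rw [← hS, hR, Finset.card_insert_of_notMem n2, Finset.card_insert_of_notMem hyR]
      have hi := ih R.card (by omega) R rfl
      have hsum : ∑ v ∈ R, (W x v + W y v) ≤ R.card * 6 := by
        refine Finset.sum_le_card_nsmul _ _ _ fun v hv => ?_
        have := hT x hx y hy v (by rw [hR]; simp [hv]) hxy (by grind) (by grind)
        omega
      simp only [Finset.sum_add_distrib] at hsum
      rw [hR, aux_insert W hs h0 _ x n2, aux_insert W hs h0 _ y hyR, Finset.sum_insert hyR, hc]
      have := h4 x y
      nlinarith
    · push Not at hE
      have hrow : ∀ u ∈ S, ∑ v ∈ S, W u v ≤ (n - 1) * 3 := by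
        intro u hu
        rw [← Finset.sum_erase S (h0 u), ← hS, ← Finset.card_erase_of_mem hu]
        refine Finset.sum_le_card_nsmul _ _ _ fun v hv => ?_
        have := hE u hu v (Finset.mem_of_mem_erase hv) (Finset.ne_of_mem_erase hv).symm
        omega
      have := Finset.sum_le_card_nsmul S _ _ hrow
      rw [hS, smul_eq_mul] at this
      rcases n with _ | n
      · rw [Finset.card_eq_zero.mp hS]
        simp
      · simp only [Nat.add_sub_cancel] at this
        nlinarith

lemma aux_c2 (j : ℕ) : (2 * (j.choose 2 : ℤ)) = j * (j - 1) := by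
  induction j with
  | zero => simp
  | succ j ih =>
    rw [Nat.choose_succ_succ' j 1]
    push_cast
    rw [Nat.choose_one_right]
    linarith

lemma aux_c3 (j : ℕ) : (6 * (j.choose 3 : ℤ)) = j * (j - 1) * (j - 2) := by
  induction j with
  | zero => simp
  | succ j ih =>
    rw [Nat.choose_succ_succ' j 2]
    have := aux_c2 j
    push_cast
    linear_combination ih + 3 * this

lemma aux_b_even (k : ℕ) (hk : 1 ≤ k) : (b (2 * k) : ℤ) = k ^ 2 * (k - 1) := by
  have e1 : (2 * k) / 2 = k := by omega
  have e2 : (2 * k + 1) / 2 = k := by omega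
  unfold b
  rw [e1, e2]
  have h1 := aux_c3 (2 * k)
  have h2 := aux_c3 k
  push_cast at h1
  have h3 : ((2 * k).choose 3 : ℤ) - k.choose 3 - k.choose 3 = k ^ 2 * (k - 1) := by
    nlinarith
  have h4 : (0 : ℤ) ≤ k ^ 2 * (k - 1) := by
    have : (0 : ℤ) ≤ k - 1 := by omega
    positivity
  omega

lemma aux_b_odd (k : ℕ) : ((k : ℤ) + 2) * (k + 3) * (2 * k + 3) ≤ 2 * b (2 * k + 5) := by
  have e1 : (2 * k + 5) / 2 = k + 2 := by omega
  have e2 : (2 * k + 5 + 1) / 2 = k + 3 := by omega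
  unfold b
  rw [e1, e2]
  have h1 := aux_c3 (2 * k + 5)
  have h2 := aux_c3 (k + 2)
  have h3 := aux_c3 (k + 3)
  push_cast at h1 h2 h3
  have h4 : 2 * (((2 * k + 5).choose 3 : ℤ) - (k + 2).choose 3 - (k + 3).choose 3)
      = ((k : ℤ) + 2) * (k + 3) * (2 * k + 3) := by
    nlinarith
  omega

open Classical in
lemma aux_ncard {V : Type*} [Fintype V] (G : SimpleGraph V) :
    2 * G.edgeSet.ncard = ∑ u : V, ∑ v : V, if G.Adj u v then 1 else 0 := by
  have h := G.sum_degrees_eq_twice_card_edges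
  rw [Set.ncard_eq_toFinset_card', ← SimpleGraph.edgeFinset, ← h]
  refine Finset.sum_congr rfl fun u _ => ?_
  rw [← Finset.card_filter, ← SimpleGraph.card_neighborFinset_eq_degree,
    SimpleGraph.neighborFinset_eq_filter]

open Classical in
lemma aux_e (m : ℕ) (G : Fin 5 → SimpleGraph (Fin m)) (hG : ¬ HasThreeCrossingPairs G) :
    8 * (∑ i, (G i).edgeSet.ncard) + 5 * m ≤ 15 * m ^ 2 := by
  have h : ∀ c : Fin 5, ∑ i ∈ Finset.univ.erase c, 2 * (G i).edgeSet.ncard + m ≤ 3 * m ^ 2 := by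
    intro c
    have hI : (Finset.univ.erase c).card = 4 := by
      rw [Finset.card_erase_of_mem (Finset.mem_univ c)]; simp
    have := aux_main (fun x y => ((Finset.univ.erase c).filter (fun i => (G i).Adj x y)).card)
      (fun x y => by simp only [SimpleGraph.adj_comm]) (fun x => by simp)
      (fun x y => hI ▸ Finset.card_filter_le _ _)
      (aux_four_s17 G hG _ hI _ (fun x y => rfl)) m Finset.univ (by simp)
    refine le_trans (le_of_eq ?_) this
    congr 1
    simp only [aux_ncard, Finset.card_filter]
    rw [Finset.sum_comm]
    refine Finset.sum_congr rfl fun u _ => ?_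
    rw [Finset.sum_comm]
  have h' : ∀ c : Fin 5, ∑ i, 2 * (G i).edgeSet.ncard + m
      ≤ 3 * m ^ 2 + 2 * (G c).edgeSet.ncard := by
    intro c
    have := h c
    rw [← Finset.sum_erase_add _ _ (Finset.mem_univ c)]
    omega
  have h0 := h' 0
  have h1 := h' 1
  have h2 := h' 2
  have h3 := h' 3
  have h4 := h' 4
  simp only [Fin.sum_univ_five] at *
  omega

/-- If `n ≥ 9` is odd, then for every `5`-multigraph on `n − 5` vertices without three
crossing pairs with `e` edges in total, `b(n−5) + e + 7(n−5) + 10 < b(n)`. -/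
theorem b_f5_inequality_five (n : ℕ) (hn : 9 ≤ n) (hodd : Odd n)
    (G : Fin 5 → SimpleGraph (Fin (n - 5))) (hG : ¬ HasThreeCrossingPairs G) :
    b (n - 5) + (∑ i, (G i).edgeSet.ncard) + 7 * (n - 5) + 10 < b n := by
  
  obtain ⟨k, hk⟩ : ∃ k, n = 2 * k + 5 := by
    obtain ⟨t, ht⟩ := hodd
    exact ⟨t - 2, by omega⟩
  have he := aux_e (n - 5) G hG
  have hm : n - 5 = 2 * k := by omega
  generalize (∑ i, (G i).edgeSet.ncard) = e at *
  rw [hm] at he ⊢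
  rw [hk]
  have h1 := aux_b_even k (by omega)
  have h2 := aux_b_odd k
  zify at he ⊢
  have hk2 : (2 : ℤ) ≤ k := by omega
  nlinarith
end
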